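/- arXiv:2009.09751 — 8 statements merged into one kernel-verified Lean document; each statement's English description precedes it below -/
import Mathlib

section
/- Let p ∈ [1/2, 1), let U : (0,∞) → ℝ be strictly increasing, strictly concave, continuously differentiable, with lim_{x→0⁺} U'(x) = ∞ and lim_{x→∞} U'(x) = 0, and let V(y) = sup_{x>0} (U(x) − xy) be its conjugate function. For n ≥ 1 let a_n = (√n/(z_{1,1} − z_{1,0})) · log( (p/(1−p)) · (exp(z_{1,1}/√n) − 1)/(1 − exp(z_{1,0}/√n)) ) and b_n = n · log( (1−p)·exp(−z_{1,0} a_n/√n) + p·exp(−z_{1,1} a_n/√n) ), where z_{1,0} = −√(p/(1−p)) and z_{1,1} = √((1−p)/p). For y > 0 define v(y) = ∫_ℝ V(y · exp(−t/2 − 1/8)) φ(t) dt and v_n(y) = Σ_{k=0}^n V(y · exp(−a_n z_{n,k} − b_n)) f_{n,k}. Then for every y > 0, limsup_{n→∞} v_n(y) ≤ v(y). -/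
open MeasureTheory Filter

/-- The standard normal density. -/
noncomputable def normalPdf (x : ℝ) : ℝ := Real.exp (-x ^ 2 / 2) / Real.sqrt (2 * Real.pi)

/-- Binomial probabilities `f_{n,k} = (n choose k) p^k (1-p)^(n-k)`. -/
noncomputable def binProb (p : ℝ) (n k : ℕ) : ℝ := (n.choose k : ℝ) * p ^ k * (1 - p) ^ (n - k)

/-- Standardized points `z_{n,k} = (k - np)/√(np(1-p))` (also used for `k = n+1`, `k = -1`). -/
noncomputable def zpt (p : ℝ) (n : ℕ) (k : ℤ) : ℝ :=
  ((k : ℝ) - n * p) / Real.sqrt (n * p * (1 - p))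

noncomputable def z10 (p : ℝ) : ℝ := -Real.sqrt (p / (1 - p))

noncomputable def z11 (p : ℝ) : ℝ := Real.sqrt ((1 - p) / p)

/-- The coefficient `a_n` of the martingale density of the `n`-step binomial model. -/
noncomputable def aCoef (p : ℝ) (n : ℕ) : ℝ :=
  (Real.sqrt n / (z11 p - z10 p)) *
    Real.log ((p / (1 - p)) * (Real.exp (z11 p / Real.sqrt n) - 1) /
      (1 - Real.exp (z10 p / Real.sqrt n)))

/-- The coefficient `b_n` of the martingale density of the `n`-step binomial model. -/
noncomputable def bCoef (p : ℝ) (n : ℕ) : ℝ :=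
  n * Real.log ((1 - p) * Real.exp (-(z10 p) * aCoef p n / Real.sqrt n) +
    p * Real.exp (-(z11 p) * aCoef p n / Real.sqrt n))


/-! ### The conjugate function -/

section Conj

variable {U V : ℝ → ℝ}

lemma conj_bdd (hU_mono : StrictMonoOn U (Set.Ioi 0))
    (hU_smooth : ContDiffOn ℝ 1 U (Set.Ioi 0))
    (hU_inada_infty : Tendsto (deriv U) atTop (nhds 0)) {y : ℝ} (hy : 0 < y) :
    BddAbove {r : ℝ | ∃ x > (0 : ℝ), r = U x - x * y} := by
  have h1 : ∀ᶠ x in atTop, deriv U x < y := hU_inada_infty.eventually (gt_mem_nhds hy)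
  obtain ⟨x1, hx1⟩ := eventually_atTop.1 h1
  set x0 := max x1 1 with hx0
  have hx0pos : 0 < x0 := lt_of_lt_of_le one_pos (le_max_right _ _)
  have hdiff : ∀ x > 0, DifferentiableAt ℝ U x := fun x hx =>
    (hU_smooth.differentiableOn (by norm_num)).differentiableAt (Ioi_mem_nhds hx)
  have hanti : AntitoneOn (fun x => U x - x * y) (Set.Ici x0) := by
    apply antitoneOn_of_deriv_nonpos (convex_Ici _)
    · intro x hx
      have : DifferentiableAt ℝ U x := hdiff x (lt_of_lt_of_le hx0pos hx)
      exact (this.sub (by fun_prop)).continuousAt.continuousWithinAt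
    · intro x hx
      rw [interior_Ici] at hx
      have : DifferentiableAt ℝ U x := hdiff x (lt_trans hx0pos hx)
      exact (this.sub (by fun_prop)).differentiableWithinAt
    · intro x hx
      rw [interior_Ici] at hx
      have hd : DifferentiableAt ℝ U x := hdiff x (lt_trans hx0pos hx)
      have : HasDerivAt (fun x => U x - x * y) (deriv U x - 1 * y) x :=
        hd.hasDerivAt.sub ((hasDerivAt_id x).mul_const y)
      rw [this.deriv]
      have := hx1 x ((le_max_left _ _).trans (le_of_lt hx))
      linarith
  refine ⟨U x0, ?_⟩
  rintro r ⟨x, hx, rfl⟩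
  have hxy : 0 < x * y := mul_pos hx hy
  rcases le_total x x0 with h | h
  · have := hU_mono.monotoneOn hx hx0pos h
    linarith
  · have := hanti (Set.self_mem_Ici) h h
    simp only at this
    have : 0 < x0 * y := mul_pos hx0pos hy
    linarith

lemma conj_ge (hV : ∀ y : ℝ, V y = sSup {r : ℝ | ∃ x > (0 : ℝ), r = U x - x * y})
    (hb : ∀ y > 0, BddAbove {r : ℝ | ∃ x > (0 : ℝ), r = U x - x * y}) {y x : ℝ} (hy : 0 < y)
    (hx : 0 < x) : U x - x * y ≤ V y := by
  rw [hV]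
  exact le_csSup (hb y hy) ⟨x, hx, rfl⟩

lemma conj_le (hV : ∀ y : ℝ, V y = sSup {r : ℝ | ∃ x > (0 : ℝ), r = U x - x * y})
    {y c : ℝ} (h : ∀ x > 0, U x - x * y ≤ c) : V y ≤ c := by
  rw [hV]
  refine csSup_le ⟨_, 1, one_pos, rfl⟩ ?_
  rintro r ⟨x, hx, rfl⟩
  exact h x hx

lemma conj_anti (hV : ∀ y : ℝ, V y = sSup {r : ℝ | ∃ x > (0 : ℝ), r = U x - x * y})
    (hb : ∀ y > 0, BddAbove {r : ℝ | ∃ x > (0 : ℝ), r = U x - x * y}) :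
    AntitoneOn V (Set.Ioi 0) := by
  intro y hy y' hy' hyy
  apply conj_le hV
  intro x hx
  have := conj_ge hV hb hy hx
  nlinarith [mul_le_mul_of_nonneg_left hyy hx.le]

lemma conj_cont (hV : ∀ y : ℝ, V y = sSup {r : ℝ | ∃ x > (0 : ℝ), r = U x - x * y})
    (hb : ∀ y > 0, BddAbove {r : ℝ | ∃ x > (0 : ℝ), r = U x - x * y}) :
    ContinuousOn V (Set.Ioi 0) := by
  apply ConvexOn.continuousOn isOpen_Ioi
  refine ⟨convex_Ioi 0, ?_⟩
  intro y hy z hz a b ha hb' hab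
  apply conj_le hV
  intro x hx
  have h1 := mul_le_mul_of_nonneg_left (conj_ge hV hb hy hx) ha
  have h2 := mul_le_mul_of_nonneg_left (conj_ge hV hb hz hx) hb'
  simp only [smul_eq_mul]
  have : U x = a * U x + b * U x := by rw [← add_mul, hab, one_mul]
  nlinarith

end Conj

/-! ### Binomial estimates -/

lemma binProb_nonneg {p : ℝ} (hp0 : 0 ≤ p) (hp1 : p ≤ 1) (n k : ℕ) : 0 ≤ binProb p n k := by
  unfold binProb
  have : 0 ≤ 1 - p := by linarith
  positivity

lemma binProb_zero {p : ℝ} {n k : ℕ} (h : n < k) : binProb p n k = 0 := by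
  simp [binProb, Nat.choose_eq_zero_of_lt h]

lemma binProb_sum {p : ℝ} (n : ℕ) : ∑ k ∈ Finset.range (n + 1), binProb p n k = 1 := by
  have := add_pow p (1 - p) n
  simp only [add_sub_cancel, one_pow] at this
  rw [this]
  exact Finset.sum_congr rfl fun k _ => by unfold binProb; ring

lemma binProb_sum_le {p : ℝ} (hp0 : 0 ≤ p) (hp1 : p ≤ 1) (n : ℕ) (s : Finset ℕ) :
    ∑ k ∈ s, binProb p n k ≤ 1 := by
  rw [← binProb_sum (p := p) n, ← Finset.sum_filter_add_sum_filter_not s (fun k => k ≤ n)]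
  have h2 : ∑ k ∈ s with ¬ k ≤ n, binProb p n k = 0 := by
    apply Finset.sum_eq_zero
    intro k hk
    exact binProb_zero (by simpa using (Finset.mem_filter.1 hk).2)
  rw [h2, add_zero]
  apply Finset.sum_le_sum_of_subset_of_nonneg
  · intro k hk
    have := (Finset.mem_filter.1 hk).2
    simp; omega
  · intro k _ _
    exact binProb_nonneg hp0 hp1 n k

lemma binProb_succ (p : ℝ) (n k : ℕ) :
    binProb p n (k + 1) * ((k + 1) * (1 - p)) = binProb p n k * ((n - k) * p) := by
  rcases lt_or_ge k n with h | h
  · have h1 := Nat.choose_succ_right_eq n k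
    have h2 : (n.choose (k + 1) : ℝ) * (k + 1) = n.choose k * (n - k) := by
      have := congrArg (Nat.cast (R := ℝ)) h1
      push_cast [Nat.cast_sub h.le] at this
      exact this
    have h3 : n - k = (n - (k + 1)) + 1 := by omega
    unfold binProb
    rw [h3, pow_succ (1 - p), pow_succ p]
    linear_combination p ^ k * p * (1 - p) ^ (n - (k + 1)) * (1 - p) * h2
  · rw [binProb_zero (Nat.lt_succ_of_le h), zero_mul]
    rcases h.eq_or_lt with rfl | h
    · simp
    · simp [binProb_zero h]

/-- lower bound for the ratio -/
lemma binProb_ratio_ge {p : ℝ} (hp0 : 0 < p) (hp1 : p < 1) {n k : ℕ} (hn : 1 ≤ n)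
    (hk : (n : ℝ) * p ≤ k) :
    binProb p n k * (1 - (k - n * p + 1) / (n * p * (1 - p))) ≤ binProb p n (k + 1) := by
  have hq : 0 < 1 - p := by linarith
  have hn' : (0 : ℝ) < n := by exact_mod_cast hn
  have h := binProb_succ p n k
  have hD : 0 < ((k : ℝ) + 1) * (1 - p) := by positivity
  have hD' : 0 < (n : ℝ) * p * (1 - p) := by positivity
  have e : binProb p n (k + 1) = binProb p n k * ((n - k) * p / ((k + 1) * (1 - p))) := by
    rw [← mul_div_assoc, eq_div_iff hD.ne', h]
  rw [e]
  apply mul_le_mul_of_nonneg_left _ (binProb_nonneg hp0.le hp1.le n k)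
  rw [le_div_iff₀ hD]
  have h4 : (k - n * p + 1) / (n * p * (1 - p)) * ((k + 1) * (1 - p)) ≥ (k - n * p + 1) := by
    rw [div_mul_eq_mul_div, ge_iff_le, le_div_iff₀ hD']
    apply mul_le_mul_of_nonneg_left _ (by linarith)
    exact mul_le_mul_of_nonneg_right (by linarith) hq.le
  nlinarith

lemma log_aux1 {x : ℝ} (hx : 0 ≤ x) : Real.exp (x - x ^ 2 / 2) ≤ 1 + x := by
  rw [← Real.le_log_iff_exp_le (by linarith)]
  refine le_trans ?_ (Real.le_log_one_add_of_nonneg hx)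
  rw [le_div_iff₀ (by linarith)]
  nlinarith [pow_nonneg hx 3]

lemma log_aux2 {x : ℝ} (hx : 0 ≤ x) (hx1 : x < 1) : 1 - x ≤ Real.exp (-x - x ^ 2 / 2) := by
  have h0 : 0 < 1 - x := by linarith
  have h1 := Real.le_log_one_add_of_nonneg (x := x / (1 - x)) (by positivity)
  have h2 : 1 + x / (1 - x) = (1 - x)⁻¹ := by field_simp; ring
  rw [h2, Real.log_inv] at h1
  have h3 : 2 * (x / (1 - x)) / (x / (1 - x) + 2) = 2 * x / (2 - x) := by
    have : x / (1 - x) + 2 = (2 - x) / (1 - x) := by field_simp; ring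
    rw [this, ← mul_div_assoc, div_div_div_cancel_right₀ h0.ne']
  rw [h3] at h1
  have h4 : x + x ^ 2 / 2 ≤ 2 * x / (2 - x) := by
    rw [le_div_iff₀ (by linarith)]
    nlinarith [pow_nonneg hx 3]
  rw [← Real.log_le_iff_le_exp h0]
  linarith

/-- upper bound for the ratio, relative to the Gaussian ratio -/
lemma binProb_ratio_le {p : ℝ} (hp0 : 1 / 2 ≤ p) (hp1 : p < 1) {n k : ℕ} (hn : 1 ≤ n)
    (hk : (n : ℝ) * p ≤ k) (hkn : k < n) :
    binProb p n (k + 1) * Real.exp ((k + 1 - n * p) ^ 2 / (2 * (n * p * (1 - p)))) ≤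
    Real.exp (((p - 1 / 2) / (p * (1 - p)) + 3 / (2 * p ^ 2)) / n) *
      (binProb p n k * Real.exp ((k - n * p) ^ 2 / (2 * (n * p * (1 - p))))) := by
  have hp : 0 < p := by linarith
  have hq : 0 < 1 - p := by linarith
  have hn' : (0 : ℝ) < n := by exact_mod_cast hn
  have hn1 : (1 : ℝ) ≤ n := by exact_mod_cast hn
  have hkn' : (k : ℝ) < n := by exact_mod_cast hkn
  have h := binProb_succ p n k
  have hD : 0 < ((k : ℝ) + 1) * (1 - p) := by positivity
  have e : binProb p n (k + 1) = binProb p n k * ((n - k) * p / ((k + 1) * (1 - p))) := by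
    rw [← mul_div_assoc, eq_div_iff hD.ne', h]
  obtain ⟨j, hj⟩ : ∃ j : ℝ, j = k - n * p := ⟨_, rfl⟩
  have hkj : (k : ℝ) = n * p + j := by linarith
  have hj0 : 0 ≤ j := by linarith
  have hjq : j < n * (1 - p) := by nlinarith
  set x := j / (n * (1 - p)) with hx
  set w := (j + 1) / (n * p) with hw
  have hx0 : 0 ≤ x := by positivity
  have hx1 : x < 1 := by rw [hx, div_lt_one (by positivity)]; exact hjq
  have hw0 : 0 ≤ w := by positivity
  have e2 : ((n : ℝ) - k) * p / ((k + 1) * (1 - p)) = (1 - x) / (1 + w) := by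
    rw [hkj, hx, hw]
    have : n * p + j + 1 ≠ 0 := by positivity
    have : n * p + (j + 1) ≠ 0 := by positivity
    field_simp
    ring
  have h3 : (1 - x) / (1 + w) ≤ Real.exp (-x - x ^ 2 / 2 - (w - w ^ 2 / 2)) := by
    rw [Real.exp_sub]
    exact div_le_div₀ (Real.exp_pos _).le (log_aux2 hx0 hx1) (Real.exp_pos _) (log_aux1 hw0)
  rw [e, e2]
  have hb := binProb_nonneg hp.le hp1.le n k
  have key : -x - x ^ 2 / 2 - (w - w ^ 2 / 2) + (k + 1 - n * p) ^ 2 / (2 * (n * p * (1 - p)))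
      ≤ ((p - 1 / 2) / (p * (1 - p)) + 3 / (2 * p ^ 2)) / n +
        (k - n * p) ^ 2 / (2 * (n * p * (1 - p))) := by
    have i1 : w ^ 2 - x ^ 2 ≤ 3 / (n * p ^ 2) := by
      have i2 : (j / (n * p)) ^ 2 ≤ x ^ 2 := by
        apply pow_le_pow_left₀ (by positivity)
        rw [hx]
        exact div_le_div_of_nonneg_left hj0 (by positivity) (by nlinarith)
      have i3 : w ^ 2 - (j / (n * p)) ^ 2 ≤ 3 / (n * p ^ 2) := by
        have : w ^ 2 - (j / (n * p)) ^ 2 = (2 * j + 1) / (n ^ 2 * p ^ 2) := by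
          rw [hw]; field_simp; ring
        rw [this, div_le_div_iff₀ (by positivity) (by positivity)]
        have : 2 * j + 1 ≤ 3 * n := by nlinarith
        nlinarith [mul_le_mul_of_nonneg_right this (by positivity : 0 ≤ n * p ^ 2)]
      linarith
    have i4 : ((k:ℝ) + 1 - n * p) ^ 2 / (2 * (n * p * (1 - p))) -
        (k - n * p) ^ 2 / (2 * (n * p * (1 - p))) - x - w = (p - 1 / 2) / (p * (1 - p)) / n := by
      rw [hkj, hx, hw]; field_simp; ring
    have i5 : 3 / (2 * p ^ 2) / n = 3 / (n * p ^ 2) / 2 := by field_simp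
    rw [add_div, i5]
    linarith
  calc binProb p n k * ((1 - x) / (1 + w)) *
        Real.exp ((k + 1 - n * p) ^ 2 / (2 * (n * p * (1 - p))))
      ≤ binProb p n k * Real.exp (-x - x ^ 2 / 2 - (w - w ^ 2 / 2)) *
        Real.exp ((k + 1 - n * p) ^ 2 / (2 * (n * p * (1 - p)))) := by gcongr
    _ = binProb p n k * Real.exp (-x - x ^ 2 / 2 - (w - w ^ 2 / 2) +
        (k + 1 - n * p) ^ 2 / (2 * (n * p * (1 - p)))) := by rw [Real.exp_add]; ring
    _ ≤ binProb p n k * Real.exp (((p - 1 / 2) / (p * (1 - p)) + 3 / (2 * p ^ 2)) / n +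
        (k - n * p) ^ 2 / (2 * (n * p * (1 - p)))) := by gcongr
    _ = _ := by rw [Real.exp_add]; ring

/-- bound at the centre -/
lemma binProb_center {p : ℝ} (hp0 : 0 < p) (hp1 : p < 1) {n : ℕ} (hn : 1 ≤ n)
    (hn2 : 2 ≤ n * p * (1 - p)) :
    binProb p n ⌈(n : ℝ) * p⌉₊ ≤ 8 / Real.sqrt (n * p * (1 - p)) := by
  set s2 := (n : ℝ) * p * (1 - p) with hs2
  set k0 := ⌈(n : ℝ) * p⌉₊ with hk0
  have hk1 : (n : ℝ) * p ≤ k0 := Nat.le_ceil _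
  have hk2 : (k0 : ℝ) < n * p + 1 := Nat.ceil_lt_add_one (by positivity)
  have hs2pos : 0 < s2 := by linarith
  obtain ⟨L, hL⟩ : ∃ L : ℕ, L = ⌊Real.sqrt (s2 / 2)⌋₊ := ⟨_, rfl⟩
  have hs1 : 1 ≤ Real.sqrt (s2 / 2) := by
    rw [Real.one_le_sqrt]; linarith
  have hL1 : 1 ≤ L := by rw [hL]; exact Nat.one_le_floor_iff _ |>.2 hs1
  have hLle : (L : ℝ) ≤ Real.sqrt (s2 / 2) := by rw [hL]; exact Nat.floor_le (by positivity)
  have hLge : Real.sqrt (s2 / 2) < L + 1 := by rw [hL]; exact Nat.lt_floor_add_one _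
  have hL1' : (1 : ℝ) ≤ L := by exact_mod_cast hL1
  have hLsq : (L : ℝ) ^ 2 ≤ s2 / 2 := by
    have := pow_le_pow_left₀ (by positivity) hLle 2
    rwa [Real.sq_sqrt (by positivity)] at this
  set f0 := binProb p n k0 with hf0
  have hf0n : 0 ≤ f0 := binProb_nonneg hp0.le hp1.le _ _
  have hind : ∀ i : ℕ, i < L → f0 * (1 - i * (L + 1) / s2) ≤ binProb p n (k0 + i) := by
    intro i
    induction i with
    | zero => intro _; simp [hf0]
    | succ i ih =>
      intro hi
      have hi' : (i : ℝ) + 1 ≤ L - 1 + 1 := by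
        have : (i + 1 : ℕ) ≤ L := hi.le
        have : ((i + 1 : ℕ) : ℝ) ≤ L := by exact_mod_cast this
        push_cast at this; linarith
      have ih' := ih (by omega)
      have hr := binProb_ratio_ge hp0 hp1 hn (k := k0 + i) (by push_cast; linarith)
      refine le_trans ?_ hr
      push_cast
      set u := (i : ℝ) * (L + 1) / s2 with hu
      have hu0 : 0 ≤ u := by positivity
      set d := ((k0 : ℝ) + i - n * p + 1) / s2 with hd
      have hd0 : 0 ≤ d := by
        apply div_nonneg _ hs2pos.le
        have : (0:ℝ) ≤ i := by positivity
        linarith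
      have hd1 : d ≤ (L + 1) / s2 := by
        apply div_le_div_of_nonneg_right _ hs2pos.le
        linarith
      have hdle : d ≤ 1 := by
        refine hd1.trans ?_
        rw [div_le_one hs2pos]; nlinarith
      have : ((i : ℝ) + 1) * (L + 1) / s2 = u + (L + 1) / s2 := by rw [hu]; ring
      rw [this]
      calc f0 * (1 - (u + (L + 1) / s2)) ≤ f0 * ((1 - u) * (1 - d)) := by
            apply mul_le_mul_of_nonneg_left _ hf0n
            nlinarith [mul_nonneg hu0 hd0]
        _ = f0 * (1 - u) * (1 - d) := by ring
        _ ≤ _ := mul_le_mul_of_nonneg_right ih' (by linarith)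
  have hhalf : ∀ i ∈ Finset.range L, f0 / 2 ≤ binProb p n (k0 + i) := by
    intro i hi
    rw [Finset.mem_range] at hi
    refine le_trans ?_ (hind i hi)
    have hi' : (i : ℝ) ≤ L - 1 := by
      have : ((i + 1 : ℕ) : ℝ) ≤ L := by exact_mod_cast hi
      push_cast at this; linarith
    have : (i : ℝ) * (L + 1) / s2 ≤ 1 / 2 := by
      rw [div_le_iff₀ hs2pos]
      nlinarith
    nlinarith
  have hsum : (L : ℝ) * (f0 / 2) ≤ 1 := by
    have h1 := Finset.sum_le_sum hhalf
    simp only [Finset.sum_const, Finset.card_range, nsmul_eq_mul] at h1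
    refine h1.trans ?_
    have := binProb_sum_le hp0.le hp1.le n ((Finset.range L).map (addLeftEmbedding k0))
    rw [Finset.sum_map] at this
    exact this
  have hs : Real.sqrt s2 ≤ 4 * L := by
    have h5 : Real.sqrt s2 ≤ 2 * Real.sqrt (s2 / 2) := by
      rw [Real.sqrt_le_left (by positivity), mul_pow, Real.sq_sqrt (by positivity)]
      linarith
    linarith
  rw [le_div_iff₀ (Real.sqrt_pos.2 hs2pos)]
  nlinarith

/-- Gaussian domination of the upper part of the binomial distribution -/
lemma binProb_dom {p : ℝ} (hp0 : 1 / 2 ≤ p) (hp1 : p < 1) :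
    ∃ C : ℝ, 0 ≤ C ∧ ∀ n : ℕ, 1 ≤ n → 2 ≤ n * p * (1 - p) → ∀ k : ℕ, (n : ℝ) * p ≤ k → k ≤ n →
      binProb p n k ≤ C / Real.sqrt (n * p * (1 - p)) *
        Real.exp (-((k - n * p) ^ 2 / (2 * (n * p * (1 - p))))) := by
  have hp : 0 < p := by linarith
  have hq : 0 < 1 - p := by linarith
  set c := (p - 1 / 2) / (p * (1 - p)) + 3 / (2 * p ^ 2) with hc
  have hc0 : 0 ≤ c := by
    have : 0 ≤ p - 1 / 2 := by linarith
    positivity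
  refine ⟨Real.exp c * (8 * Real.exp 1), by positivity, ?_⟩
  intro n hn hn2 k hk hkn
  have hn' : (0 : ℝ) < n := by exact_mod_cast hn
  set s2 := (n : ℝ) * p * (1 - p) with hs2
  have hs2pos : 0 < s2 := by linarith
  set k0 := ⌈(n : ℝ) * p⌉₊ with hk0
  have hk1 : (n : ℝ) * p ≤ k0 := Nat.le_ceil _
  have hk2 : (k0 : ℝ) < n * p + 1 := Nat.ceil_lt_add_one (by positivity)
  have hkk : k0 ≤ k := Nat.ceil_le.2 hk
  obtain ⟨i, rfl⟩ := Nat.exists_eq_add_of_le hkk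
  have hind : ∀ i : ℕ, k0 + i ≤ n → binProb p n (k0 + i) *
      Real.exp (((k0 + i : ℕ) - n * p) ^ 2 / (2 * s2)) ≤ Real.exp (c / n * i) *
      (binProb p n k0 * Real.exp ((k0 - n * p) ^ 2 / (2 * s2))) := by
    intro i
    induction i with
    | zero => intro _; simp
    | succ i ih =>
      intro hi
      have h1 := binProb_ratio_le hp0 hp1 hn (k := k0 + i) (by push_cast; linarith [Nat.cast_nonneg (α := ℝ) i]) (by omega)
      have h2 := ih (by omega)
      have h3 := mul_le_mul_of_nonneg_left h2 (Real.exp_pos (c / n)).le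
      refine le_trans ?_ (h1.trans (h3.trans_eq ?_))
      · rw [← add_assoc]; push_cast; exact le_rfl
      · rw [← mul_assoc, ← Real.exp_add]; push_cast; ring_nf
  have h1 := hind i hkn
  have h2 : Real.exp (c / n * i) ≤ Real.exp c := by
    apply Real.exp_le_exp.2
    rw [div_mul_eq_mul_div, div_le_iff₀ hn']
    apply mul_le_mul_of_nonneg_left _ hc0
    have : i ≤ n := by omega
    exact_mod_cast this
  have h3 : Real.exp ((k0 - n * p) ^ 2 / (2 * s2)) ≤ Real.exp 1 := by
    apply Real.exp_le_exp.2
    rw [div_le_one (by positivity)]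
    nlinarith
  have h4 := binProb_center hp hp1 hn hn2
  have h5 := binProb_nonneg hp.le hp1.le n k0
  rw [Real.exp_neg, ← div_eq_mul_inv, le_div_iff₀ (Real.exp_pos _)]
  refine h1.trans ?_
  calc Real.exp (c / n * i) * (binProb p n k0 * Real.exp ((k0 - n * p) ^ 2 / (2 * s2)))
      ≤ Real.exp c * (8 / Real.sqrt s2 * Real.exp 1) := by gcongr
    _ = _ := by ring

/-! ### The coefficients -/

lemma z11_eq {p : ℝ} (hp0 : 0 < p) (hp1 : p < 1) : z11 p = (1 - p) / Real.sqrt (p * (1 - p)) := by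
  have hq : 0 < 1 - p := by linarith
  unfold z11
  rw [Real.sqrt_eq_iff_mul_self_eq (by positivity) (by positivity), div_mul_div_comm,
    Real.mul_self_sqrt (by positivity)]
  field_simp

lemma z10_eq {p : ℝ} (hp0 : 0 < p) (hp1 : p < 1) : z10 p = -(p / Real.sqrt (p * (1 - p))) := by
  have hq : 0 < 1 - p := by linarith
  unfold z10
  rw [neg_inj, Real.sqrt_eq_iff_mul_self_eq (by positivity) (by positivity), div_mul_div_comm,
    Real.mul_self_sqrt (by positivity)]
  field_simp

lemma z11_pos {p : ℝ} (hp0 : 0 < p) (hp1 : p < 1) : 0 < z11 p := by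
  have hq : 0 < 1 - p := by linarith
  rw [z11_eq hp0 hp1]; positivity

lemma z10_neg {p : ℝ} (hp0 : 0 < p) (hp1 : p < 1) : z10 p < 0 := by
  have hq : 0 < 1 - p := by linarith
  rw [z10_eq hp0 hp1]
  have : 0 < p / Real.sqrt (p * (1 - p)) := by positivity
  linarith

lemma z_mean {p : ℝ} (hp0 : 0 < p) (hp1 : p < 1) : p * z11 p + (1 - p) * z10 p = 0 := by
  rw [z11_eq hp0 hp1, z10_eq hp0 hp1]; ring

lemma z_var {p : ℝ} (hp0 : 0 < p) (hp1 : p < 1) :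
    p * z11 p ^ 2 + (1 - p) * z10 p ^ 2 = 1 := by
  have hq : 0 < 1 - p := by linarith
  rw [z11_eq hp0 hp1, z10_eq hp0 hp1, neg_sq, div_pow, div_pow, Real.sq_sqrt (by positivity)]
  field_simp
  ring

lemma zpt_eq {p : ℝ} (hp0 : 0 < p) (hp1 : p < 1) (n : ℕ) (k : ℕ) :
    zpt p n k = (k * z11 p + (n - k) * z10 p) / Real.sqrt n := by
  have hq : 0 < 1 - p := by linarith
  rw [z11_eq hp0 hp1, z10_eq hp0 hp1]
  unfold zpt
  have : Real.sqrt (n * p * (1 - p)) = Real.sqrt (p * (1 - p)) * Real.sqrt n := by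
    rw [← Real.sqrt_mul (by positivity)]; ring_nf
  rw [this, ← div_div]
  congr 1
  push_cast
  ring

lemma exp_taylor {x : ℂ} (hx : ‖x‖ ≤ 1) : ‖Complex.exp x - (1 + x + x ^ 2 / 2)‖ ≤ ‖x‖ ^ 3 := by
  have := Complex.exp_bound hx (n := 3) (by norm_num)
  simp only [Finset.sum_range_succ, Finset.sum_range_zero, Nat.factorial] at this
  norm_num at this
  refine this.trans ?_
  nlinarith [pow_nonneg (norm_nonneg x) 3]

lemma gen_asymp {p : ℝ} (hp0 : 0 < p) (hp1 : p < 1) (R : ℝ) (hR : 0 ≤ R) :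
    ∃ C : ℝ, 0 ≤ C ∧ ∀ᶠ n : ℕ in atTop, ∀ θ : ℂ, ‖θ‖ ≤ R →
      ‖(n : ℂ) * ((p : ℂ) * Complex.exp (θ * (z11 p) / (Real.sqrt n : ℝ)) +
        (1 - p : ℂ) * Complex.exp (θ * (z10 p) / (Real.sqrt n : ℝ)) - 1) - θ ^ 2 / 2‖
        ≤ C / Real.sqrt n := by
  have hq : 0 < 1 - p := by linarith
  have hα := z11_pos hp0 hp1
  have hβ := z10_neg hp0 hp1
  set B := z11 p - z10 p with hB
  have hB0 : 0 < B := by linarith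
  refine ⟨(R * B) ^ 3, by positivity, ?_⟩
  filter_upwards [eventually_ge_atTop (⌈(R * B) ^ 2⌉₊ + 1)] with n hn θ hθ
  have hn1 : 1 ≤ n := by omega
  have hn' : (0 : ℝ) < n := by exact_mod_cast hn1
  have hs : 0 < Real.sqrt n := Real.sqrt_pos.2 hn'
  have hss : Real.sqrt n * Real.sqrt n = n := Real.mul_self_sqrt hn'.le
  have hRB : R * B ≤ Real.sqrt n := by
    apply Real.le_sqrt_of_sq_le
    refine (Nat.le_ceil _).trans ?_
    exact_mod_cast (by omega : ⌈(R * B) ^ 2⌉₊ ≤ n)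
  set x := θ * (z11 p) / (Real.sqrt n : ℝ) with hx
  set w := θ * (z10 p) / (Real.sqrt n : ℝ) with hw
  have hxn : ‖x‖ ≤ R * B / Real.sqrt n := by
    rw [hx, norm_div, norm_mul, Complex.norm_real, Complex.norm_real, Real.norm_of_nonneg hs.le,
      Real.norm_of_nonneg hα.le]
    gcongr
    linarith
  have hwn : ‖w‖ ≤ R * B / Real.sqrt n := by
    rw [hw, norm_div, norm_mul, Complex.norm_real, Complex.norm_real, Real.norm_of_nonneg hs.le,
      Real.norm_of_nonpos hβ.le]
    gcongr
    all_goals linarith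
  have h1 : R * B / Real.sqrt n ≤ 1 := by rwa [div_le_one hs]
  have ex := (exp_taylor (hxn.trans h1)).trans (pow_le_pow_left₀ (norm_nonneg _) hxn 3)
  have ew := (exp_taylor (hwn.trans h1)).trans (pow_le_pow_left₀ (norm_nonneg _) hwn 3)
  have hsC : ((Real.sqrt n : ℝ) : ℂ) ≠ 0 := by exact_mod_cast hs.ne'
  have hssC : ((Real.sqrt n : ℝ) : ℂ) ^ 2 = n := by
    rw [sq]; exact_mod_cast hss
  have m1 : (p : ℂ) * z11 p + (1 - p) * z10 p = 0 := by exact_mod_cast z_mean hp0 hp1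
  have m2 : (p : ℂ) * z11 p ^ 2 + (1 - p) * z10 p ^ 2 = 1 := by exact_mod_cast z_var hp0 hp1
  have lin : (p : ℂ) * x + (1 - p) * w = 0 := by
    rw [hx, hw]
    linear_combination θ / (Real.sqrt n : ℝ) * m1
  have quad : (n : ℂ) * ((p : ℂ) * x ^ 2 + (1 - p) * w ^ 2) = θ ^ 2 := by
    rw [hx, hw, ← hssC]
    field_simp
    linear_combination θ ^ 2 * m2
  have key : (n : ℂ) * ((p : ℂ) * Complex.exp x + (1 - p : ℂ) * Complex.exp w - 1) - θ ^ 2 / 2 =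
      (n : ℂ) * ((p : ℂ) * (Complex.exp x - (1 + x + x ^ 2 / 2)) +
        (1 - p : ℂ) * (Complex.exp w - (1 + w + w ^ 2 / 2))) := by
    linear_combination (n : ℂ) * lin + 1 / 2 * quad
  rw [key, norm_mul, Complex.norm_natCast]
  have hpn : ‖(p : ℂ)‖ = p := by rw [Complex.norm_real, Real.norm_of_nonneg hp0.le]
  have hqn : ‖(1 - p : ℂ)‖ = 1 - p := by
    rw [show (1 - p : ℂ) = ((1 - p : ℝ) : ℂ) by push_cast; rfl, Complex.norm_real,
      Real.norm_of_nonneg hq.le]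
  calc (n : ℝ) * ‖(p : ℂ) * (Complex.exp x - (1 + x + x ^ 2 / 2)) +
        (1 - p : ℂ) * (Complex.exp w - (1 + w + w ^ 2 / 2))‖
      ≤ n * (p * (R * B / Real.sqrt n) ^ 3 + (1 - p) * (R * B / Real.sqrt n) ^ 3) := by
        gcongr
        refine (norm_add_le _ _).trans ?_
        rw [norm_mul, norm_mul, hpn, hqn]
        gcongr
    _ = (Real.sqrt n * Real.sqrt n) * (R * B / Real.sqrt n) ^ 3 := by rw [hss]; ring
    _ = (R * B) ^ 3 / Real.sqrt n := by field_simp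

lemma sinh_le_mul_exp {x : ℝ} (hx : 0 ≤ x) : Real.sinh x ≤ x * Real.exp (x ^ 2 / 2) := by
  have h : MonotoneOn (fun x => x * Real.cosh x - Real.sinh x) (Set.Ici 0) := by
    apply monotoneOn_of_deriv_nonneg (convex_Ici 0) (by fun_prop) (by fun_prop)
    intro t ht
    rw [interior_Ici] at ht
    have : HasDerivAt (fun x => x * Real.cosh x - Real.sinh x)
        (1 * Real.cosh t + t * Real.sinh t - Real.cosh t) t :=
      ((hasDerivAt_id t).mul (Real.hasDerivAt_cosh t)).sub (Real.hasDerivAt_sinh t)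
    rw [this.deriv]
    have := Real.sinh_nonneg_iff.2 (le_of_lt ht)
    have h0 : (0 : ℝ) < t := ht
    nlinarith [mul_nonneg h0.le this]
  have h1 := h Set.self_mem_Ici hx hx
  simp at h1
  exact h1.trans (mul_le_mul_of_nonneg_left (Real.cosh_le_exp_half_sq x) hx)

lemma sinh_ratio {a b x : ℝ} (ha : 0 ≤ a) (hab : a ≤ b) (hx : 0 ≤ x) :
    b * Real.sinh (a * x) ≤ a * Real.sinh (b * x) := by
  have h : MonotoneOn (fun x => a * Real.sinh (b * x) - b * Real.sinh (a * x)) (Set.Ici 0) := by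
    apply monotoneOn_of_deriv_nonneg (convex_Ici 0) (by fun_prop) (by fun_prop)
    intro t ht
    rw [interior_Ici] at ht
    have h0 : (0 : ℝ) < t := ht
    have e1 : HasDerivAt (fun x => a * Real.sinh (b * x)) (a * (Real.cosh (b * t) * (b * 1))) t :=
      (((hasDerivAt_id t).const_mul b).sinh).const_mul a
    have e2 : HasDerivAt (fun x => b * Real.sinh (a * x)) (b * (Real.cosh (a * t) * (a * 1))) t :=
      (((hasDerivAt_id t).const_mul a).sinh).const_mul b
    have e3 : HasDerivAt (fun x => a * Real.sinh (b * x) - b * Real.sinh (a * x)) _ t := e1.sub e2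
    rw [e3.deriv]
    have : Real.cosh (a * t) ≤ Real.cosh (b * t) := by
      rw [Real.cosh_le_cosh, abs_of_nonneg (by positivity), abs_of_nonneg (by nlinarith)]
      nlinarith
    have hab' : 0 ≤ a * b := by nlinarith
    nlinarith [mul_le_mul_of_nonneg_left this hab']
  have h1 := h Set.self_mem_Ici hx hx
  simp at h1
  exact h1

lemma aCoef_bounds {p : ℝ} (hp0 : 1 / 2 ≤ p) (hp1 : p < 1) {n : ℕ} (hn : 1 ≤ n) :
    aCoef p n ≤ 1 / 2 ∧
      1 / 2 - z10 p ^ 2 / (8 * (z11 p - z10 p)) / Real.sqrt n ≤ aCoef p n := by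
  have hp : 0 < p := by linarith
  have hq : 0 < 1 - p := by linarith
  have hα := z11_pos hp hp1
  have hβ := z10_neg hp hp1
  obtain ⟨α, hαe⟩ : ∃ α, α = z11 p := ⟨_, rfl⟩
  obtain ⟨β, hβe⟩ : ∃ β, β = -z10 p := ⟨_, rfl⟩
  have hz : z10 p = -β := by linarith
  have hmean : p * α = (1 - p) * β := by
    have := z_mean hp hp1
    rw [← hαe, hz] at this; linarith
  unfold aCoef
  rw [← hαe] at hα ⊢
  rw [hz] at hβ ⊢
  have hβ0 : 0 < β := by linarith
  have hαβ : α ≤ β := by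
    by_contra hcon
    push Not at hcon
    nlinarith
  have hn' : (0 : ℝ) < n := by exact_mod_cast hn
  have hs : 0 < Real.sqrt n := Real.sqrt_pos.2 hn'
  obtain ⟨h, hh⟩ : ∃ h, h = (Real.sqrt n)⁻¹ / 2 := ⟨_, rfl⟩
  have hh0 : 0 < h := by rw [hh]; positivity
  have e1 : α / Real.sqrt n = α * h + α * h := by rw [hh]; field_simp; norm_num
  have e2 : -β / Real.sqrt n = -(β * h) + -(β * h) := by rw [hh]; field_simp; norm_num
  have f1 : Real.exp (α / Real.sqrt n) - 1 = 2 * Real.exp (α * h) * Real.sinh (α * h) := by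
    rw [e1, Real.exp_add, Real.sinh_eq, Real.exp_neg]
    field_simp
  have f2 : 1 - Real.exp (-β / Real.sqrt n) = 2 * Real.exp (-(β * h)) * Real.sinh (β * h) := by
    rw [e2, Real.exp_add, Real.sinh_eq, Real.exp_neg]
    field_simp
  have s1 : 0 < Real.sinh (α * h) := Real.sinh_pos_iff.2 (by positivity)
  have s2 : 0 < Real.sinh (β * h) := Real.sinh_pos_iff.2 (by positivity)
  have hpq : p / (1 - p) = β / α := by
    rw [div_eq_div_iff hq.ne' hα.ne']; linarith
  set R := β / α * Real.sinh (α * h) / Real.sinh (β * h) with hR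
  have hRpos : 0 < R := by positivity
  have f3 : p / (1 - p) * (Real.exp (α / Real.sqrt n) - 1) / (1 - Real.exp (-β / Real.sqrt n)) =
      Real.exp ((α + β) * h) * R := by
    rw [f1, f2, hpq, hR, show (α + β) * h = α * h + β * h by ring, Real.exp_add, Real.exp_neg]
    field_simp
  rw [f3, Real.log_mul (Real.exp_pos _).ne' hRpos.ne', Real.log_exp]
  have hmain : Real.sqrt n / (α - -β) * ((α + β) * h + Real.log R) =
      1 / 2 + Real.sqrt n / (α + β) * Real.log R := by
    rw [hh, sub_neg_eq_add, mul_add]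
    congr 1
    have : α + β ≠ 0 := by positivity
    field_simp
  rw [hmain]
  constructor
  · have hR1 : R ≤ 1 := by
      rw [hR, div_le_one s2, div_mul_eq_mul_div, div_le_iff₀ hα]
      have := sinh_ratio hα.le hαβ hh0.le
      linarith
    have : Real.log R ≤ 0 := Real.log_nonpos hRpos.le hR1
    have h3 : 0 ≤ Real.sqrt n / (α + β) := by positivity
    nlinarith [mul_nonneg h3 (neg_nonneg.2 this)]
  · have hR2 : -((β * h) ^ 2 / 2) ≤ Real.log R := by
      rw [Real.le_log_iff_exp_le hRpos, hR, le_div_iff₀ s2]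
      calc Real.exp (-((β * h) ^ 2 / 2)) * Real.sinh (β * h)
          ≤ Real.exp (-((β * h) ^ 2 / 2)) * (β * h * Real.exp ((β * h) ^ 2 / 2)) := by
            gcongr
            exact sinh_le_mul_exp (by positivity)
        _ = β / α * (α * h) := by
            rw [Real.exp_neg]; field_simp
        _ ≤ _ := by
            gcongr
            exact Real.self_le_sinh_iff.2 (by positivity)
    have h3 : 0 ≤ Real.sqrt n / (α + β) := by positivity
    have h4 := mul_le_mul_of_nonneg_left hR2 h3
    have h5 : Real.sqrt n / (α + β) * -((β * h) ^ 2 / 2) =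
        - ((-β) ^ 2 / (8 * (α - -β)) / Real.sqrt n) := by
      rw [hh, sub_neg_eq_add]
      have : α + β ≠ 0 := by positivity
      field_simp
      norm_num
    rw [h5] at h4
    linarith

lemma tendsto_const_div_sqrt (C : ℝ) :
    Tendsto (fun n : ℕ => C / Real.sqrt n) atTop (nhds 0) :=
  tendsto_const_nhds.div_atTop (Real.tendsto_sqrt_atTop.comp tendsto_natCast_atTop_atTop)

lemma aCoef_tendsto {p : ℝ} (hp0 : 1 / 2 ≤ p) (hp1 : p < 1) :
    Tendsto (fun n => aCoef p n) atTop (nhds (1 / 2)) := by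
  have h1 : Tendsto (fun n : ℕ => 1 / 2 - z10 p ^ 2 / (8 * (z11 p - z10 p)) / Real.sqrt n) atTop
      (nhds (1 / 2 - 0)) := tendsto_const_nhds.sub (tendsto_const_div_sqrt _)
  rw [sub_zero] at h1
  refine tendsto_of_tendsto_of_tendsto_of_le_of_le' h1 tendsto_const_nhds ?_ ?_
  · filter_upwards [eventually_ge_atTop 1] with n hn using (aCoef_bounds hp0 hp1 hn).2
  · filter_upwards [eventually_ge_atTop 1] with n hn using (aCoef_bounds hp0 hp1 hn).1

/-- one-step moment generating function -/
noncomputable def stepMgf (p : ℝ) (n : ℕ) : ℝ :=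
  (1 - p) * Real.exp (-(z10 p) * aCoef p n / Real.sqrt n) +
    p * Real.exp (-(z11 p) * aCoef p n / Real.sqrt n)

lemma stepMgf_pos {p : ℝ} (hp0 : 0 < p) (hp1 : p < 1) (n : ℕ) : 0 < stepMgf p n := by
  have hq : 0 < 1 - p := by linarith
  unfold stepMgf; positivity

lemma stepMgf_asymp {p : ℝ} (hp0 : 1 / 2 ≤ p) (hp1 : p < 1) :
    ∃ C : ℝ, 0 ≤ C ∧ ∀ᶠ n : ℕ in atTop,
      |n * (stepMgf p n - 1) - aCoef p n ^ 2 / 2| ≤ C / Real.sqrt n := by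
  have hp : 0 < p := by linarith
  obtain ⟨C, hC, h⟩ := gen_asymp hp hp1 1 zero_le_one
  refine ⟨C, hC, ?_⟩
  have ha : ∀ᶠ n in atTop, |aCoef p n| < 1 := by
    have := (aCoef_tendsto hp0 hp1).abs
    exact this.eventually (gt_mem_nhds (by norm_num [abs_of_pos]))
  filter_upwards [h, ha] with n hn han
  have := hn ((-aCoef p n : ℝ) : ℂ) (by
    rw [Complex.norm_real, Real.norm_eq_abs, abs_neg]; exact han.le)
  rw [← Real.norm_eq_abs, ← Complex.norm_real]
  refine le_trans (le_of_eq ?_) this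
  congr 1
  unfold stepMgf
  push_cast
  ring_nf

lemma bCoef_tendsto {p : ℝ} (hp0 : 1 / 2 ≤ p) (hp1 : p < 1) :
    Tendsto (fun n => bCoef p n) atTop (nhds (1 / 8)) := by
  obtain ⟨C, hC, h⟩ := stepMgf_asymp hp0 hp1
  have hp : 0 < p := by linarith
  have h0 : Tendsto (fun n : ℕ => (n : ℝ) * (stepMgf p n - 1) - aCoef p n ^ 2 / 2) atTop (nhds 0) :=
    squeeze_zero_norm' h (tendsto_const_div_sqrt C)
  have h1 : Tendsto (fun n : ℕ => (n : ℝ) * (stepMgf p n - 1)) atTop (nhds (1 / 8)) := by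
    have := h0.add (((aCoef_tendsto hp0 hp1).pow 2).div_const 2)
    norm_num at this
    simpa using this
  rw [← Filter.tendsto_ofReal_iff] at h1 ⊢
  have h2 : Tendsto (fun n : ℕ => (n : ℂ) * ((stepMgf p n - 1 : ℝ) : ℂ)) atTop
      (nhds ((1 / 8 : ℝ) : ℂ)) := by
    refine h1.congr fun n => ?_
    push_cast; rfl
  refine (Complex.tendsto_nat_mul_log_one_add_of_tendsto h2).congr fun n => ?_
  have : (1 : ℂ) + ((stepMgf p n - 1 : ℝ) : ℂ) = (stepMgf p n : ℝ) := by push_cast; ring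
  rw [this, ← Complex.ofReal_log (stepMgf_pos hp hp1 n).le]
  unfold bCoef stepMgf
  push_cast
  rfl

lemma bCoef_le {p : ℝ} (hp0 : 1 / 2 ≤ p) (hp1 : p < 1) :
    ∃ C : ℝ, 0 ≤ C ∧ ∀ᶠ n : ℕ in atTop, bCoef p n ≤ 1 / 8 + C / Real.sqrt n := by
  obtain ⟨C, hC, h⟩ := stepMgf_asymp hp0 hp1
  have hp : 0 < p := by linarith
  refine ⟨C, hC, ?_⟩
  have ha : ∀ᶠ n in atTop, 0 < aCoef p n :=
    (aCoef_tendsto hp0 hp1).eventually (lt_mem_nhds (by norm_num))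
  filter_upwards [h, ha, eventually_ge_atTop 1] with n hn han hn1
  have h1 := (aCoef_bounds hp0 hp1 hn1).1
  have h2 : bCoef p n ≤ n * (stepMgf p n - 1) := by
    unfold bCoef
    exact mul_le_mul_of_nonneg_left (Real.log_le_sub_one_of_pos (stepMgf_pos hp hp1 n))
      (Nat.cast_nonneg n)
  have h3 := (abs_le.1 hn).2
  nlinarith

/-! ### Weak convergence -/

lemma binProb_gen (p : ℝ) (n : ℕ) (A B : ℂ) :
    ∑ k ∈ Finset.range (n + 1), (A ^ k * B ^ (n - k)) * (binProb p n k : ℂ) =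
      (p * A + (1 - p) * B) ^ n := by
  rw [add_pow]
  refine Finset.sum_congr rfl fun k _ => ?_
  unfold binProb
  push_cast
  rw [mul_pow, mul_pow]
  ring

lemma exp_zpt {p : ℝ} (hp0 : 0 < p) (hp1 : p < 1) {n k : ℕ} (hk : k ≤ n) (θ : ℂ) :
    Complex.exp (θ * (zpt p n k : ℝ)) = Complex.exp (θ * (z11 p) / (Real.sqrt n : ℝ)) ^ k *
      Complex.exp (θ * (z10 p) / (Real.sqrt n : ℝ)) ^ (n - k) := by
  rw [zpt_eq hp0 hp1, ← Complex.exp_nat_mul, ← Complex.exp_nat_mul, ← Complex.exp_add]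
  congr 1
  push_cast [Nat.cast_sub hk]
  ring

lemma binProb_mgf {p : ℝ} (hp0 : 0 < p) (hp1 : p < 1) (n : ℕ) (θ : ℂ) :
    ∑ k ∈ Finset.range (n + 1), Complex.exp (θ * (zpt p n k : ℝ)) * (binProb p n k : ℂ) =
      (p * Complex.exp (θ * (z11 p) / (Real.sqrt n : ℝ)) +
        (1 - p) * Complex.exp (θ * (z10 p) / (Real.sqrt n : ℝ))) ^ n := by
  rw [← binProb_gen]
  refine Finset.sum_congr rfl fun k hk => ?_
  rw [exp_zpt hp0 hp1 (by simpa [Nat.lt_succ_iff] using hk)]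

/-- the density is normalized -/
lemma density_sum {p : ℝ} (hp0 : 0 < p) (hp1 : p < 1) (n : ℕ) :
    ∑ k ∈ Finset.range (n + 1),
      Real.exp (-(aCoef p n) * zpt p n k - bCoef p n) * binProb p n k = 1 := by
  have h := binProb_mgf hp0 hp1 n ((-aCoef p n : ℝ) : ℂ)
  have h2 : ∑ k ∈ Finset.range (n + 1),
      Real.exp (-(aCoef p n) * zpt p n k) * binProb p n k = stepMgf p n ^ n := by
    have : ((∑ k ∈ Finset.range (n + 1),
      Real.exp (-(aCoef p n) * zpt p n k) * binProb p n k : ℝ) : ℂ) = (stepMgf p n ^ n : ℝ) := by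
      push_cast at h ⊢
      rw [h]
      unfold stepMgf
      push_cast
      ring_nf
    exact_mod_cast this
  have h3 : Real.exp (bCoef p n) = stepMgf p n ^ n := by
    have : bCoef p n = n * Real.log (stepMgf p n) := rfl
    rw [this, Real.exp_nat_mul, Real.exp_log (stepMgf_pos hp0 hp1 n)]
  simp_rw [Real.exp_sub, div_mul_eq_mul_div]
  rw [← Finset.sum_div, h2, h3, div_self (pow_pos (stepMgf_pos hp0 hp1 n) n).ne']

/-- the standardized log-density -/
noncomputable def wpt (p : ℝ) (n k : ℕ) : ℝ := 2 * aCoef p n * zpt p n k + (2 * bCoef p n - 1 / 4)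

/-- law of the standardized log-density -/
noncomputable def wLaw (p : ℝ) (n : ℕ) : Measure ℝ :=
  ∑ k ∈ Finset.range (n + 1), ENNReal.ofReal (binProb p n k) • Measure.dirac (wpt p n k)

lemma wLaw_prob {p : ℝ} (hp0 : 0 < p) (hp1 : p < 1) (n : ℕ) : IsProbabilityMeasure (wLaw p n) := by
  constructor
  unfold wLaw
  simp only [Measure.finsetSum_apply, Measure.smul_apply, measure_univ, smul_eq_mul, mul_one]
  rw [← ENNReal.ofReal_sum_of_nonneg (fun k _ => binProb_nonneg hp0.le hp1.le n k), binProb_sum,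
    ENNReal.ofReal_one]

lemma wLaw_integral {E : Type*} [NormedAddCommGroup E] [NormedSpace ℝ E] [CompleteSpace E]
    {p : ℝ} (hp0 : 0 < p) (hp1 : p < 1) (n : ℕ) (g : ℝ → E) :
    ∫ x, g x ∂(wLaw p n) = ∑ k ∈ Finset.range (n + 1), binProb p n k • g (wpt p n k) := by
  unfold wLaw
  rw [integral_finsetSum_measure]
  · refine Finset.sum_congr rfl fun k _ => ?_
    rw [integral_smul_measure, integral_dirac,
      ENNReal.toReal_ofReal (binProb_nonneg hp0.le hp1.le n k)]
  · exact fun _ _ ↦ (integrable_dirac (by simp)).smul_measure (by simp)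

lemma wLaw_charFun {p : ℝ} (hp0 : 0 < p) (hp1 : p < 1) (n : ℕ) (t : ℝ) :
    charFun (wLaw p n) t = Complex.exp (t * (2 * bCoef p n - 1 / 4 : ℝ) * Complex.I) *
      (p * Complex.exp ((2 * t * aCoef p n * Complex.I) * (z11 p) / (Real.sqrt n : ℝ)) +
        (1 - p) * Complex.exp ((2 * t * aCoef p n * Complex.I) * (z10 p) / (Real.sqrt n : ℝ))) ^ n := by
  rw [charFun_apply_real, wLaw_integral hp0 hp1, ← binProb_mgf hp0 hp1, Finset.mul_sum]
  refine Finset.sum_congr rfl fun k _ => ?_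
  rw [Complex.real_smul, ← mul_assoc, ← Complex.exp_add, mul_comm]
  congr 2
  unfold wpt
  push_cast
  ring

lemma weak_conv {p : ℝ} (hp0 : 1 / 2 ≤ p) (hp1 : p < 1) (g : BoundedContinuousFunction ℝ ℝ) :
    Tendsto (fun n : ℕ => ∑ k ∈ Finset.range (n + 1), g (wpt p n k) * binProb p n k) atTop
      (nhds (∫ t, g t * normalPdf t)) := by
  have hp : 0 < p := by linarith
  let μ : ℕ → ProbabilityMeasure ℝ := fun n => ⟨wLaw p n, wLaw_prob hp hp1 n⟩
  let γ : ProbabilityMeasure ℝ := ⟨ProbabilityTheory.gaussianReal 0 1, inferInstance⟩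
  have hconv : Tendsto μ atTop (nhds γ) := by
    rw [ProbabilityMeasure.tendsto_iff_tendsto_charFun]
    intro t
    have hγ : charFun (γ : Measure ℝ) t = Complex.exp (0 * Complex.I) *
        Complex.exp ((t * Complex.I) ^ 2 / 2) := by
      change charFun (ProbabilityTheory.gaussianReal 0 1) t = _
      rw [ProbabilityTheory.charFun_gaussianReal, ← Complex.exp_add]
      congr 1
      push_cast
      rw [mul_pow, Complex.I_sq]
      ring
    rw [hγ]
    have hμ : ∀ n, charFun (μ n : Measure ℝ) t = _ := fun n => wLaw_charFun hp hp1 n t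
    simp_rw [hμ]
    have ha := aCoef_tendsto hp0 hp1
    have hb := bCoef_tendsto hp0 hp1
    apply Tendsto.mul
    · apply (Complex.continuous_exp.tendsto _).comp
      apply Tendsto.mul_const
      have h1 : Tendsto (fun n => t * (2 * bCoef p n - 1 / 4)) atTop (nhds 0) := by
        have := ((hb.const_mul 2).sub_const (1 / 4)).const_mul t
        norm_num at this
        simpa using this
      rw [← Filter.tendsto_ofReal_iff] at h1
      simpa using h1
    · obtain ⟨C, hC, hgen⟩ := gen_asymp hp hp1 (|t| * 2) (by positivity)
      set θ : ℕ → ℂ := fun n => 2 * t * aCoef p n * Complex.I with hθ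
      have hθlim : Tendsto θ atTop (nhds (t * Complex.I)) := by
        have h1 : Tendsto (fun n => 2 * t * aCoef p n) atTop (nhds t) := by
          have := ha.const_mul (2 * t)
          convert! this using 2
          ring
        rw [← Filter.tendsto_ofReal_iff] at h1
        have := h1.mul_const Complex.I
        push_cast at this
        exact this
      have ha1 : ∀ᶠ n in atTop, |aCoef p n| < 1 :=
        ha.abs.eventually (gt_mem_nhds (by norm_num [abs_of_pos]))
      have hlim0 : Tendsto (fun n : ℕ => (n : ℂ) *
          ((p : ℂ) * Complex.exp (θ n * (z11 p) / (Real.sqrt n : ℝ)) +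
          (1 - p : ℂ) * Complex.exp (θ n * (z10 p) / (Real.sqrt n : ℝ)) - 1) - θ n ^ 2 / 2) atTop
          (nhds 0) := by
        apply squeeze_zero_norm' _ (tendsto_const_div_sqrt C)
        filter_upwards [hgen, ha1] with n h1 h2
        apply h1
        simp only [hθ, norm_mul, Complex.norm_I, Complex.norm_real, Real.norm_eq_abs, mul_one,
          Complex.norm_ofNat]
        nlinarith [abs_nonneg t, abs_nonneg (aCoef p n)]
      have hlim1 := hlim0.add ((hθlim.pow 2).div_const 2)
      simp only [sub_add_cancel, zero_add] at hlim1
      refine (Complex.tendsto_one_add_pow_exp_of_tendsto hlim1).congr fun n => ?_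
      congr 1
      ring
  have h := (ProbabilityMeasure.tendsto_iff_forall_integral_tendsto.1 hconv) g
  have hlim : ∫ x, g x ∂(γ : Measure ℝ) = ∫ t, g t * normalPdf t := by
    change ∫ x, g x ∂(ProbabilityTheory.gaussianReal 0 1) = _
    rw [ProbabilityTheory.integral_gaussianReal_eq_integral_smul one_ne_zero]
    refine integral_congr_ae (Eventually.of_forall fun x => ?_)
    simp only [ProbabilityTheory.gaussianPDFReal, normalPdf, smul_eq_mul]
    simp
    ring
  rw [hlim] at h
  refine h.congr fun n => ?_
  change ∫ x, g x ∂(wLaw p n) = _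
  rw [wLaw_integral hp hp1]
  exact Finset.sum_congr rfl fun k _ => by rw [smul_eq_mul, mul_comm]

/-! ### Tail domination and conclusion -/

lemma normalPdf_pos (t : ℝ) : 0 < normalPdf t := by unfold normalPdf; positivity

lemma normalPdf_integrable : Integrable normalPdf := by
  have h := ProbabilityTheory.integrable_gaussianPDFReal 0 1
  refine h.congr (Eventually.of_forall fun x => ?_)
  simp only [ProbabilityTheory.gaussianPDFReal, normalPdf]
  simp
  ring

lemma normalPdf_cont : Continuous normalPdf := by unfold normalPdf; fun_prop

lemma normalPdf_anti {a b : ℝ} (ha : 0 ≤ a) (hab : a ≤ b) : normalPdf b ≤ normalPdf a := by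
  unfold normalPdf
  gcongr

lemma exp_normalPdf_integrable : Integrable fun t => Real.exp (-t / 2 - 1 / 8) * normalPdf t := by
  have h := normalPdf_integrable.comp_add_right (1 / 2)
  convert! h using 2 with t
  unfold normalPdf
  rw [← mul_div_assoc, ← Real.exp_add]
  congr 2
  ring

lemma tail_bound {p : ℝ} (hp0 : 1 / 2 ≤ p) (hp1 : p < 1) (m : ℕ) :
    ∃ C : ℝ, 0 ≤ C ∧ ∀ n : ℕ, 1 ≤ n → 2 ≤ n * p * (1 - p) → ∀ g : ℝ → ℝ, Monotone g →
      (∀ t, 0 ≤ g t) → Integrable (fun t => g t * normalPdf t) → ∀ k0 : ℕ, (n : ℝ) * p ≤ k0 →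
      k0 ≤ n + 1 →
      ∑ k ∈ Finset.Ico k0 (n + 1), g ((k + m - n * p) / Real.sqrt (n * p * (1 - p))) * binProb p n k
        ≤ C * ∫ t, g t * normalPdf t := by
  obtain ⟨C1, hC1, hdom⟩ := binProb_dom hp0 hp1
  have hp : 0 < p := by linarith
  have hq : 0 < 1 - p := by linarith
  set C := C1 * Real.sqrt (2 * Real.pi) * Real.exp (2 * (m + 1) + (m + 1) ^ 2 / 4) with hC
  refine ⟨C, by positivity, ?_⟩
  intro n hn hv g hg hg0 hgi k0 hk0 hk0n
  set s := Real.sqrt (n * p * (1 - p)) with hs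
  have hs2 : s ^ 2 = n * p * (1 - p) := Real.sq_sqrt (by linarith)
  have hspos : 0 < s := Real.sqrt_pos.2 (by linarith)
  set x : ℕ → ℝ := fun j => (j + m - n * p) / s with hx
  have hstep : ∀ k, x (k + 1) - x k = 1 / s := by
    intro k
    simp only [hx]
    push_cast
    field_simp
    ring
  have hstep0 : 0 < 1 / s := by positivity
  have hgInt : ∀ a b, IntervalIntegrable (fun t => g t * normalPdf t) volume a b :=
    fun a b => hgi.intervalIntegrable
  have key : ∀ k ∈ Finset.Ico k0 (n + 1), g (x k) * binProb p n k ≤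
      C * ∫ t in x k..x (k + 1), g t * normalPdf t := by
    intro k hk
    rw [Finset.mem_Ico] at hk
    have hknp : (n : ℝ) * p ≤ k := hk0.trans (by exact_mod_cast hk.1)
    have hkn : k ≤ n := by omega
    have hxk : 0 ≤ x k := by
      apply div_nonneg _ hspos.le
      have : (0 : ℝ) ≤ m := Nat.cast_nonneg m
      linarith
    have h1 : (1 / s) * (g (x k) * normalPdf (x (k + 1))) ≤
        ∫ t in x k..x (k + 1), g t * normalPdf t := by
      have := intervalIntegral.integral_mono_on (a := x k) (b := x (k + 1)) (μ := volume)
        (f := fun _ => g (x k) * normalPdf (x (k + 1))) (g := fun t => g t * normalPdf t)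
        (by linarith [hstep k]) (by simp) (hgInt _ _) (by
          intro t ht
          exact mul_le_mul (hg ht.1) (normalPdf_anti (hxk.trans ht.1) ht.2) (normalPdf_pos _).le
            (hg0 _))
      rwa [intervalIntegral.integral_const, hstep, smul_eq_mul] at this
    have h2 := hdom n hn hv k hknp hkn
    have hz : (k - n * p) / s / s ≤ 2 := by
      rw [div_div, ← sq, hs2, div_le_iff₀ (by linarith)]
      have : (k : ℝ) ≤ n := by exact_mod_cast hkn
      have hn0 : (0 : ℝ) ≤ n := Nat.cast_nonneg n
      nlinarith [mul_nonneg (mul_nonneg hn0 hq.le) (by linarith : 0 ≤ 2 * p - 1)]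
    have hs2' : 1 / s ^ 2 ≤ 1 / 2 := by
      rw [hs2]; exact one_div_le_one_div_of_le (by norm_num) hv
    have h3 : C1 * Real.exp (-((k - n * p) ^ 2 / (2 * (n * p * (1 - p))))) ≤
        C * normalPdf (x (k + 1)) := by
      have e1 : C * normalPdf (x (k + 1)) =
          C1 * Real.exp (2 * (m + 1) + (m + 1) ^ 2 / 4 + -(x (k + 1)) ^ 2 / 2) := by
        have : Real.sqrt (2 * Real.pi) ≠ 0 := by positivity
        rw [hC, normalPdf, Real.exp_add (2 * ((m : ℝ) + 1) + (m + 1) ^ 2 / 4)]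
        generalize Real.exp (2 * ((m : ℝ) + 1) + (m + 1) ^ 2 / 4) = E1
        generalize Real.exp (-(x (k + 1)) ^ 2 / 2) = E2
        field_simp
      rw [e1]
      apply mul_le_mul_of_nonneg_left _ hC1
      apply Real.exp_le_exp.2
      have e2 : -(x (k + 1)) ^ 2 / 2 = -((k - n * p) ^ 2 / (2 * s ^ 2)) -
          (m + 1) * ((k - n * p) / s / s) - (m + 1) ^ 2 / 2 * (1 / s ^ 2) := by
        simp only [hx]
        push_cast
        field_simp
        ring
      rw [e2, ← hs2]
      have hm : (0 : ℝ) ≤ m + 1 := by positivity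
      have := mul_le_mul_of_nonneg_left hz hm
      have := mul_le_mul_of_nonneg_left hs2' (by positivity : (0 : ℝ) ≤ (m + 1) ^ 2 / 2)
      linarith
    calc g (x k) * binProb p n k ≤ g (x k) * (C1 / s *
          Real.exp (-((k - n * p) ^ 2 / (2 * (n * p * (1 - p)))))) :=
          mul_le_mul_of_nonneg_left h2 (hg0 _)
      _ = g (x k) * (1 / s) * (C1 * Real.exp (-((k - n * p) ^ 2 / (2 * (n * p * (1 - p)))))) := by
          ring
      _ ≤ g (x k) * (1 / s) * (C * normalPdf (x (k + 1))) :=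
          mul_le_mul_of_nonneg_left h3 (mul_nonneg (hg0 _) hstep0.le)
      _ = C * ((1 / s) * (g (x k) * normalPdf (x (k + 1)))) := by ring
      _ ≤ _ := mul_le_mul_of_nonneg_left h1 (by positivity)
  refine (Finset.sum_le_sum key).trans ?_
  rw [← Finset.mul_sum]
  apply mul_le_mul_of_nonneg_left _ (by positivity)
  rw [intervalIntegral.sum_integral_adjacent_intervals_Ico hk0n (fun k _ => hgInt _ _)]
  have hmono : x k0 ≤ x (n + 1) := by
    simp only [hx]
    have : (k0 : ℝ) ≤ ((n + 1 : ℕ) : ℝ) := by exact_mod_cast hk0n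
    gcongr
  rw [intervalIntegral.integral_of_le hmono]
  exact setIntegral_le_integral hgi
    (Eventually.of_forall fun t => mul_nonneg (hg0 t) (normalPdf_pos t).le)

/-- Tails of the laws are dominated by Gaussian integrals. -/
lemma tail_wpt {p : ℝ} (hp0 : 1 / 2 ≤ p) (hp1 : p < 1) :
    ∃ C : ℝ, 0 ≤ C ∧ ∀ᶠ n : ℕ in atTop, ∀ g : ℝ → ℝ, Monotone g →
      (∀ t, 0 ≤ g t) → g 1 = 0 → Integrable (fun t => g t * normalPdf t) →
      ∑ k ∈ Finset.range (n + 1), g (wpt p n k) * binProb p n k ≤ C * ∫ t, g t * normalPdf t := by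
  have hp : 0 < p := by linarith
  have hq : 0 < 1 - p := by linarith
  obtain ⟨B, hB, hb⟩ := bCoef_le hp0 hp1
  obtain ⟨m, hm⟩ := exists_nat_ge (2 * B * Real.sqrt (p * (1 - p)))
  obtain ⟨C, hC, htail⟩ := tail_bound hp0 hp1 m
  refine ⟨C, hC, ?_⟩
  have ha : ∀ᶠ n in atTop, 0 < aCoef p n :=
    (aCoef_tendsto hp0 hp1).eventually (lt_mem_nhds (by norm_num))
  have hB1 : ∀ᶠ n : ℕ in atTop, 2 * B / Real.sqrt n < 1 :=
    (tendsto_const_div_sqrt (2 * B)).eventually (gt_mem_nhds one_pos)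
  have hv : ∀ᶠ n : ℕ in atTop, 2 ≤ (n : ℝ) * p * (1 - p) := by
    have : Tendsto (fun n : ℕ => (n : ℝ) * p * (1 - p)) atTop atTop :=
      (tendsto_natCast_atTop_atTop.atTop_mul_const hp).atTop_mul_const hq
    exact this.eventually_ge_atTop 2
  filter_upwards [hb, ha, hB1, hv, eventually_ge_atTop 1] with n hbn han hB1n hvn hn g hg hg0 hg1 hgi
  have ha2 := (aCoef_bounds hp0 hp1 hn).1
  set s := Real.sqrt (n * p * (1 - p)) with hs
  have hspos : 0 < s := Real.sqrt_pos.2 (by linarith)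
  have hnpos : (0 : ℝ) < n := by exact_mod_cast hn
  have hsn : s = Real.sqrt n * Real.sqrt (p * (1 - p)) := by
    rw [hs, mul_assoc, Real.sqrt_mul hnpos.le]
  have hshift : 2 * B / Real.sqrt n ≤ m / s := by
    have h1 : 0 < Real.sqrt n := Real.sqrt_pos.2 hnpos
    have h2 : 0 < Real.sqrt (p * (1 - p)) := Real.sqrt_pos.2 (mul_pos hp hq)
    rw [hsn, div_le_div_iff₀ h1 (by positivity)]
    nlinarith
  have hB2 : 2 * B / Real.sqrt n = 2 * (B / Real.sqrt n) := by ring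
  have hk0 : ⌈(n : ℝ) * p⌉₊ ≤ n + 1 := by
    apply Nat.ceil_le.2
    push_cast
    nlinarith
  have hsplit := Finset.sum_range_add_sum_Ico
    (fun k => g (wpt p n k) * binProb p n k) hk0
  rw [← hsplit]
  have hlow : ∑ k ∈ Finset.range ⌈(n : ℝ) * p⌉₊, g (wpt p n k) * binProb p n k = 0 := by
    apply Finset.sum_eq_zero
    intro k hk
    have hk' : (k : ℝ) < n * p := Nat.lt_ceil.1 (Finset.mem_range.1 hk)
    have hz : zpt p n k ≤ 0 := by
      unfold zpt
      apply div_nonpos_of_nonpos_of_nonneg _ hspos.le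
      push_cast
      linarith
    have hw : wpt p n k ≤ 1 := by
      unfold wpt
      nlinarith [mul_nonneg han.le (neg_nonneg.2 hz)]
    have : g (wpt p n k) = 0 := le_antisymm (hg1 ▸ hg hw) (hg0 _)
    rw [this, zero_mul]
  rw [hlow, zero_add]
  refine le_trans (Finset.sum_le_sum fun k hk => ?_)
    (htail n hn hvn g hg hg0 hgi _ (Nat.le_ceil _) hk0)
  apply mul_le_mul_of_nonneg_right _ (binProb_nonneg hp.le hp1.le n k)
  apply hg
  have hk' : (n : ℝ) * p ≤ k := (Nat.le_ceil _).trans (by exact_mod_cast (Finset.mem_Ico.1 hk).1)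
  have hzk : zpt p n k = (k - n * p) / s := by
    unfold zpt
    push_cast
    rfl
  have hz : 0 ≤ zpt p n k := by
    rw [hzk]
    exact div_nonneg (by linarith) hspos.le
  have e : (k + m - n * p) / s = zpt p n k + m / s := by
    rw [hzk]
    ring
  change wpt p n k ≤ (k + m - n * p) / s
  rw [e]
  unfold wpt
  nlinarith [mul_nonneg (by linarith : 0 ≤ 1 - 2 * aCoef p n) hz]

lemma upper_bound {p : ℝ} (hp0 : 1 / 2 ≤ p) (hp1 : p < 1) {G : ℝ → ℝ} (hG : Monotone G)
    (hGc : Continuous G) (hGi : Integrable (fun t => G t * normalPdf t)) {ε : ℝ} (hε : 0 < ε) :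
    ∀ᶠ n : ℕ in atTop, ∑ k ∈ Finset.range (n + 1), G (wpt p n k) * binProb p n k ≤
      (∫ t, G t * normalPdf t) + ε := by
  have hp : 0 < p := by linarith
  obtain ⟨C, hC, htail⟩ := tail_wpt hp0 hp1
  have hcl : ∀ j : ℕ, ∀ t, |max (min (G t) j) (-j)| ≤ j := by
    intro j t
    have : (0 : ℝ) ≤ j := Nat.cast_nonneg j
    rw [abs_le]
    exact ⟨le_max_right _ _, max_le (min_le_right _ _) (by linarith)⟩
  have hcl2 : ∀ j : ℕ, ∀ t, |max (min (G t) j) (-j)| ≤ |G t| := by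
    intro j t
    have : (0 : ℝ) ≤ j := Nat.cast_nonneg j
    have h1 := neg_abs_le (G t)
    have h2 := le_abs_self (G t)
    have h3 := abs_nonneg (G t)
    rw [abs_le]
    constructor
    · rcases le_total (G t) j with h | h
      · rw [min_eq_left h]
        exact h1.trans (le_max_left _ _)
      · rw [min_eq_right h]
        exact le_trans (by linarith) (le_max_left _ _)
    · exact max_le ((min_le_left _ _).trans h2) (by linarith)
  have hcong : Continuous fun t => |G t| * normalPdf t := hGc.abs.mul normalPdf_cont
  have hGi' : Integrable fun t => |G t| * normalPdf t := by
    refine hGi.abs.congr (Eventually.of_forall fun t => ?_)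
    simp only [abs_mul, abs_of_pos (normalPdf_pos t)]
  have hev : ∀ t, ∀ᶠ j : ℕ in atTop, |G t| ≤ j := fun t =>
    tendsto_natCast_atTop_atTop.eventually_ge_atTop _
  -- limit of the clipped integrals
  have hlim1 : Tendsto (fun j : ℕ => ∫ t, max (min (G t) j) (-j) * normalPdf t) atTop
      (nhds (∫ t, G t * normalPdf t)) := by
    apply tendsto_integral_of_dominated_convergence (fun t => |G t| * normalPdf t)
    · intro j
      exact (((hGc.min continuous_const).max continuous_const).mul
        normalPdf_cont).aestronglyMeasurable
    · exact hGi'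
    · intro j
      refine Eventually.of_forall fun t => ?_
      rw [Real.norm_eq_abs, abs_mul, abs_of_pos (normalPdf_pos t)]
      exact mul_le_mul_of_nonneg_right (hcl2 j t) (normalPdf_pos t).le
    · refine Eventually.of_forall fun t => ?_
      apply tendsto_const_nhds.congr'
      filter_upwards [hev t] with j hj
      have := abs_le.1 hj
      rw [min_eq_left this.2, max_eq_left this.1]
  have hpos2 : ∀ j : ℕ, ∀ t, |max (G t - j) 0| ≤ |G t| := by
    intro j t
    have : (0 : ℝ) ≤ j := Nat.cast_nonneg j
    rw [abs_of_nonneg (le_max_right _ _)]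
    exact max_le (by linarith [le_abs_self (G t)]) (abs_nonneg _)
  have hposc : ∀ j : ℕ, Continuous fun t => max (G t - j) 0 * normalPdf t := fun j =>
    ((hGc.sub continuous_const).max continuous_const).mul normalPdf_cont
  have hposb : ∀ j : ℕ, ∀ t, ‖max (G t - j) 0 * normalPdf t‖ ≤ |G t| * normalPdf t := by
    intro j t
    rw [Real.norm_eq_abs, abs_mul, abs_of_pos (normalPdf_pos t)]
    exact mul_le_mul_of_nonneg_right (hpos2 j t) (normalPdf_pos t).le
  have hlim2 : Tendsto (fun j : ℕ => ∫ t, max (G t - j) 0 * normalPdf t) atTop (nhds 0) := by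
    have h00 : (0 : ℝ) = ∫ _ : ℝ, (0 : ℝ) := by simp
    refine le_trans ?_ (le_of_eq (congrArg nhds h00.symm))
    change Tendsto _ _ _
    apply tendsto_integral_of_dominated_convergence (fun t => |G t| * normalPdf t)
    · exact fun j => (hposc j).aestronglyMeasurable
    · exact hGi'
    · exact fun j => Eventually.of_forall (hposb j)
    · refine Eventually.of_forall fun t => ?_
      apply tendsto_const_nhds.congr'
      filter_upwards [hev t] with j hj
      have := abs_le.1 hj
      rw [max_eq_right (by linarith), zero_mul]
  have hlim3 := hlim2.const_mul C
  rw [mul_zero] at hlim3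
  obtain ⟨j, hj1, hj2, hj3⟩ := ((hlim1.eventually (gt_mem_nhds
    (by linarith : ∫ t, G t * normalPdf t < (∫ t, G t * normalPdf t) + ε / 3))).and
    ((hlim3.eventually (gt_mem_nhds (by linarith : 0 < ε / 3))).and (hev 1))).exists
  let c : BoundedContinuousFunction ℝ ℝ := BoundedContinuousFunction.ofNormedAddCommGroup
    (fun t => max (min (G t) j) (-j)) ((hGc.min continuous_const).max continuous_const) j
    (fun t => hcl j t)
  have hw := weak_conv hp0 hp1 c
  have hwe := hw.eventually (gt_mem_nhds
    (by linarith : ∫ t, c t * normalPdf t < (∫ t, c t * normalPdf t) + ε / 3))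
  filter_upwards [hwe, htail] with n h1 h2
  have h3 := h2 (fun t => max (G t - j) 0)
    (fun a b hab => max_le_max (by linarith [hG hab]) le_rfl) (fun t => le_max_right _ _)
    (max_eq_right (by linarith [le_abs_self (G 1)]))
    (hGi'.mono' (hposc j).aestronglyMeasurable (Eventually.of_forall (hposb j)))
  have h4 : ∑ k ∈ Finset.range (n + 1), G (wpt p n k) * binProb p n k ≤
      ∑ k ∈ Finset.range (n + 1), c (wpt p n k) * binProb p n k +
      ∑ k ∈ Finset.range (n + 1), max (G (wpt p n k) - j) 0 * binProb p n k := by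
    rw [← Finset.sum_add_distrib]
    apply Finset.sum_le_sum
    intro k _
    rw [← add_mul]
    apply mul_le_mul_of_nonneg_right _ (binProb_nonneg hp.le hp1.le n k)
    change G (wpt p n k) ≤ max (min (G (wpt p n k)) j) (-j) + max (G (wpt p n k) - j) 0
    have e1 := le_max_left (min (G (wpt p n k)) j) (-(j : ℝ))
    rcases le_total (G (wpt p n k)) j with h | h
    · rw [min_eq_left h] at e1 ⊢
      linarith [le_max_right (G (wpt p n k) - j) 0]
    · rw [min_eq_right h] at e1 ⊢
      linarith [le_max_left (G (wpt p n k) - j) 0]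
  have h5 : ∫ t, c t * normalPdf t = ∫ t, max (min (G t) j) (-j) * normalPdf t := rfl
  linarith

lemma lower_diverge {p : ℝ} (hp0 : 1 / 2 ≤ p) (hp1 : p < 1) {F : ℝ → ℝ} (hF : ∀ t, 0 ≤ F t)
    (hFc : Continuous F) (hFi : ¬ Integrable (fun t => F t * normalPdf t)) (A : ℝ) :
    ∀ᶠ n : ℕ in atTop, A < ∑ k ∈ Finset.range (n + 1), F (wpt p n k) * binProb p n k := by
  have hp : 0 < p := by linarith
  have hc : ∀ j : ℕ, Continuous fun t => min (F t) j * normalPdf t := fun j =>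
    (hFc.min continuous_const).mul normalPdf_cont
  have hmin0 : ∀ (j : ℕ) t, 0 ≤ min (F t) j := fun j t => le_min (hF t) (Nat.cast_nonneg j)
  have hi : ∀ j : ℕ, Integrable fun t => min (F t) j * normalPdf t := by
    intro j
    refine (normalPdf_integrable.const_mul (j : ℝ)).mono' (hc j).aestronglyMeasurable
      (Eventually.of_forall fun t => ?_)
    rw [Real.norm_eq_abs, abs_of_nonneg (mul_nonneg (hmin0 j t) (normalPdf_pos t).le)]
    exact mul_le_mul_of_nonneg_right (min_le_right _ _) (normalPdf_pos t).le
  have hex : ∃ j : ℕ, A < ∫ t, min (F t) j * normalPdf t := by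
    by_contra! hcon
    apply hFi
    refine ⟨(hFc.mul normalPdf_cont).aestronglyMeasurable, ?_⟩
    rw [hasFiniteIntegral_iff_ofReal
      (Eventually.of_forall fun t => mul_nonneg (hF t) (normalPdf_pos t).le)]
    have hlim : Tendsto (fun j : ℕ => ∫⁻ t, ENNReal.ofReal (min (F t) j * normalPdf t)) atTop
        (nhds (∫⁻ t, ENNReal.ofReal (F t * normalPdf t))) := by
      apply lintegral_tendsto_of_tendsto_of_monotone
      · exact fun j => (hc j).measurable.ennreal_ofReal.aemeasurable
      · refine Eventually.of_forall fun t i j hij => ?_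
        apply ENNReal.ofReal_le_ofReal
        apply mul_le_mul_of_nonneg_right _ (normalPdf_pos t).le
        exact min_le_min le_rfl (by exact_mod_cast hij)
      · refine Eventually.of_forall fun t => ?_
        apply tendsto_const_nhds.congr'
        filter_upwards [tendsto_natCast_atTop_atTop.eventually_ge_atTop (F t)] with j hj
        rw [min_eq_left hj]
    refine lt_of_le_of_lt (le_of_tendsto' hlim fun j => ?_) (ENNReal.ofReal_lt_top (r := A))
    rw [← ofReal_integral_eq_lintegral_ofReal (hi j)
      (Eventually.of_forall fun t => mul_nonneg (hmin0 j t) (normalPdf_pos t).le)]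
    exact ENNReal.ofReal_le_ofReal (hcon j)
  obtain ⟨j, hj⟩ := hex
  let c : BoundedContinuousFunction ℝ ℝ := BoundedContinuousFunction.ofNormedAddCommGroup
    (fun t => min (F t) j) (hFc.min continuous_const) j
    (fun t => by
      rw [Real.norm_eq_abs, abs_of_nonneg (hmin0 j t)]
      exact min_le_right _ _)
  filter_upwards [(weak_conv hp0 hp1 c).eventually (lt_mem_nhds hj)] with n hn
  refine hn.trans_le (Finset.sum_le_sum fun k _ => ?_)
  exact mul_le_mul_of_nonneg_right (min_le_left _ _) (binProb_nonneg hp.le hp1.le n k)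

theorem limsup_dual_value_functions
    (p : ℝ) (hp : p ∈ Set.Ico (1 / 2 : ℝ) 1)
    (U : ℝ → ℝ)
    (hU_mono : StrictMonoOn U (Set.Ioi 0))
    (hU_conc : StrictConcaveOn ℝ (Set.Ioi 0) U)
    (hU_smooth : ContDiffOn ℝ 1 U (Set.Ioi 0))
    (hU_inada_zero : Tendsto (deriv U) (nhdsWithin 0 (Set.Ioi 0)) atTop)
    (hU_inada_infty : Tendsto (deriv U) atTop (nhds 0))
    (V : ℝ → ℝ) (hV : ∀ y : ℝ, V y = sSup {r : ℝ | ∃ x > (0 : ℝ), r = U x - x * y})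
    (v : ℝ → ℝ)
    (hv : ∀ y : ℝ, v y = ∫ t : ℝ, V (y * Real.exp (-t / 2 - 1 / 8)) * normalPdf t)
    (vn : ℕ → ℝ → ℝ)
    (hvn : ∀ n ≥ 1, ∀ y : ℝ, vn n y =
      ∑ k ∈ Finset.range (n + 1),
        V (y * Real.exp (-(aCoef p n) * zpt p n k - bCoef p n)) * binProb p n k) :
    ∀ y > 0, limsup (fun n => vn n y) atTop ≤ v y := by
  intro y hy
  obtain ⟨hp0, hp1⟩ := hp
  have hp : 0 < p := by linarith
  have hb : ∀ y > 0, BddAbove {r : ℝ | ∃ x > (0 : ℝ), r = U x - x * y} := fun y hy =>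
    conj_bdd hU_mono hU_smooth hU_inada_infty hy
  set G : ℝ → ℝ := fun t => V (y * Real.exp (-t / 2 - 1 / 8)) with hGdef
  have harg : ∀ t : ℝ, 0 < y * Real.exp (-t / 2 - 1 / 8) := fun t => by positivity
  have hG : Monotone G := by
    intro a b hab
    apply conj_anti hV hb (harg b) (harg a)
    gcongr
  have hGc : Continuous G :=
    (conj_cont hV hb).comp_continuous (by fun_prop) (fun t => harg t)
  have hwexp : ∀ n k : ℕ, Real.exp (-(aCoef p n) * zpt p n k - bCoef p n) =
      Real.exp (-wpt p n k / 2 - 1 / 8) := by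
    intro n k
    congr 1
    unfold wpt
    ring
  have hvnG : ∀ n ≥ 1, vn n y = ∑ k ∈ Finset.range (n + 1), G (wpt p n k) * binProb p n k := by
    intro n hn
    rw [hvn n hn]
    refine Finset.sum_congr rfl fun k _ => ?_
    rw [hwexp]
  set F : ℝ → ℝ := fun t => G t + y * Real.exp (-t / 2 - 1 / 8) - U 1 with hFdef
  have hF : ∀ t, 0 ≤ F t := by
    intro t
    have := conj_ge hV hb (harg t) one_pos
    simp only [hFdef, hGdef]
    linarith
  have hvnF : ∀ n ≥ 1, vn n y =
      ∑ k ∈ Finset.range (n + 1), F (wpt p n k) * binProb p n k - y + U 1 := by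
    intro n hn
    have h1 := density_sum hp hp1 n
    have h2 := binProb_sum (p := p) n
    have h3 : ∑ k ∈ Finset.range (n + 1), F (wpt p n k) * binProb p n k =
        ∑ k ∈ Finset.range (n + 1), G (wpt p n k) * binProb p n k +
        y * ∑ k ∈ Finset.range (n + 1),
          Real.exp (-(aCoef p n) * zpt p n k - bCoef p n) * binProb p n k -
        U 1 * ∑ k ∈ Finset.range (n + 1), binProb p n k := by
      rw [Finset.mul_sum, Finset.mul_sum, ← Finset.sum_add_distrib, ← Finset.sum_sub_distrib]
      refine Finset.sum_congr rfl fun k _ => ?_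
      rw [hwexp]
      simp only [hFdef]
      ring
    rw [hvnG n hn, h3, h1, h2]
    ring
  by_cases hGi : Integrable (fun t => G t * normalPdf t)
  · have hup : ∀ ε > 0, limsup (fun n => vn n y) atTop ≤ v y + ε := by
      intro ε hε
      have hlow : ∀ᶠ n in atTop, U 1 - y ≤ vn n y := by
        filter_upwards [eventually_ge_atTop 1] with n hn
        rw [hvnF n hn]
        have : 0 ≤ ∑ k ∈ Finset.range (n + 1), F (wpt p n k) * binProb p n k :=
          Finset.sum_nonneg fun k _ => mul_nonneg (hF _) (binProb_nonneg hp.le hp1.le n k)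
        linarith
      refine limsup_le_of_le (isCoboundedUnder_le_of_eventually_le atTop hlow) ?_
      filter_upwards [upper_bound hp0 hp1 hG hGc hGi hε, eventually_ge_atTop 1] with n h1 hn
      rw [hvnG n hn, hv]
      exact h1
    exact le_of_forall_pos_le_add hup
  · have hv0 : v y = 0 := by
      rw [hv]
      exact integral_undef hGi
    have hFc : Continuous F := (hGc.add (by fun_prop)).sub continuous_const
    have hFi : ¬ Integrable (fun t => F t * normalPdf t) := by
      intro h
      apply hGi
      have := (h.sub (exp_normalPdf_integrable.const_mul y)).add
        (normalPdf_integrable.const_mul (U 1))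
      refine this.congr (Eventually.of_forall fun t => ?_)
      simp only [hFdef, Pi.add_apply, Pi.sub_apply]
      ring
    rw [hv0, limsup_eq]
    have hempty : {a : ℝ | ∀ᶠ n in atTop, vn n y ≤ a} = ∅ := by
      ext a
      simp only [Set.mem_setOf_eq, Set.mem_empty_iff_false, iff_false]
      intro ha
      obtain ⟨n, h1, h2, hn⟩ := (ha.and ((lower_diverge hp0 hp1 hF hFc hFi (a + y - U 1)).and
        (eventually_ge_atTop 1))).exists
      rw [hvnF n hn] at h1
      linarith
    rw [hempty, Real.sInf_empty]
end

section
/- Let p ∈ [1/2, 1). There exists a constant C > 0 such that for all n ≥ 1 and all integers k with ⌊np⌋ ≤ k ≤ n, one has f_{n,k} ≤ C · (2/√n) · φ(z_{n,k+1}). -/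
open MeasureTheory Filter

lemma bp_nonneg {p : ℝ} (h0 : 0 < p) (h1 : p < 1) (n k : ℕ) : 0 ≤ binProb p n k := by
  unfold binProb
  have : 0 < 1 - p := by linarith
  positivity

lemma bp_rec {p : ℝ} (n k : ℕ) :
    binProb p n (k + 1) * ((k + 1 : ℝ) * (1 - p)) = binProb p n k * (((n : ℝ) - k) * p) := by
  unfold binProb
  rcases lt_or_ge k n with h | h
  · have hc : ((n.choose (k + 1) : ℕ) : ℝ) * (k + 1) = (n.choose k : ℝ) * ((n : ℝ) - k) := by
      have := Nat.choose_succ_right_eq n k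
      have h2 : ((n - k : ℕ) : ℝ) = (n : ℝ) - k := by
        rw [Nat.cast_sub h.le]
      rw [← h2]
      exact_mod_cast this
    have e : n - k = (n - (k + 1)) + 1 := by omega
    rw [e, pow_succ, pow_succ]
    linear_combination (p ^ k * p * (1 - p) ^ (n - (k + 1)) * (1 - p)) * hc
  · rw [Nat.choose_eq_zero_of_lt (by omega : n < k + 1)]
    rcases h.eq_or_lt with h | h
    · subst h; simp
    · rw [Nat.choose_eq_zero_of_lt h]; simp

lemma bp_sum {p : ℝ} (h0 : 0 < p) (h1 : p < 1) (n k m : ℕ) :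
    ∑ i ∈ Finset.range m, binProb p n (k + i) ≤ 1 := by
  have h2 : ∑ i ∈ Finset.range (n + 1), binProb p n i = 1 := by
    have := add_pow p (1 - p) n
    rw [add_sub_cancel, one_pow] at this
    rw [this]
    refine Finset.sum_congr rfl fun i _ => ?_
    unfold binProb; ring
  have h3 : ∑ i ∈ Finset.range (k + m), binProb p n i ≤ ∑ i ∈ Finset.range (n + 1), binProb p n i := by
    have e : ∑ i ∈ Finset.range (n + 1), binProb p n i
        = ∑ i ∈ Finset.range (n + 1 + (k + m)), binProb p n i := by
      apply Finset.sum_subset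
      · intro x hx; simp at *; omega
      · intro x _ hx
        unfold binProb
        rw [Nat.choose_eq_zero_of_lt (by simp at hx; omega)]; simp
    rw [e]
    apply Finset.sum_le_sum_of_subset_of_nonneg
    · intro x hx; simp at *; omega
    · intro i _ _; exact bp_nonneg h0 h1 n i
  rw [Finset.sum_range_add] at h3
  have h4 : 0 ≤ ∑ i ∈ Finset.range k, binProb p n i :=
    Finset.sum_nonneg fun i _ => bp_nonneg h0 h1 n i
  linarith

lemma bp_start {p : ℝ} (h0 : 0 < p) (h1 : p < 1) (n k : ℕ) (hn : 1 ≤ n)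
    (hk : (k : ℝ) ≤ n * p) (hk' : (n : ℝ) * p < k + 1) :
    binProb p n k ≤ 2 / Real.sqrt (n * (p * (1 - p) / 2)) := by
  have hq : 0 < 1 - p := by linarith
  have hn' : (0 : ℝ) < n := by exact_mod_cast hn
  set s := (n : ℝ) * p * (1 - p) with hs
  have hs0 : 0 < s := by positivity
  have e : (n : ℝ) * (p * (1 - p) / 2) = s / 2 := by rw [hs]; ring
  rw [e]
  set m := ⌊Real.sqrt (s / 2)⌋₊ with hm
  have hm1 : (m : ℝ) ≤ Real.sqrt (s / 2) := Nat.floor_le (Real.sqrt_nonneg _)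
  have hm2 : Real.sqrt (s / 2) < m + 1 := Nat.lt_floor_add_one _
  have hm0 : (0 : ℝ) ≤ m := Nat.cast_nonneg m
  have hmm : (m : ℝ) * m ≤ s / 2 := by
    have := Real.mul_self_sqrt (show 0 ≤ s / 2 by positivity)
    nlinarith
  have key : ∀ i : ℕ, i ≤ m → binProb p n k * (1 - i * m / s) ≤ binProb p n (k + i) := by
    intro i
    induction i with
    | zero => intro _; simp
    | succ i ih =>
      intro hi
      have ih := ih (by omega)
      have hf := bp_nonneg h0 h1 n k
      have hfi := bp_nonneg h0 h1 n (k + i)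
      have hr := bp_rec (p := p) n (k + i)
      have hi' : (i : ℝ) + 1 ≤ m := by exact_mod_cast hi
      have hi0 : (0 : ℝ) ≤ i := Nat.cast_nonneg i
      rw [← add_assoc]
      push_cast at hr ⊢
      set F := binProb p n (k + i)
      set G := binProb p n (k + i + 1)
      set f := binProb p n k
      have hD : 0 < ((k : ℝ) + i + 1) * (1 - p) := by positivity
      have hDs : s ≤ n * ((k + i + 1) * (1 - p)) := by
        have : (n : ℝ) * p ≤ n * (k + i + 1) := by nlinarith [show (1:ℝ) ≤ n by exact_mod_cast hn]
        nlinarith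
      have hDs' : s ≤ (k + i + 1) * (1 - p) := by
        rw [hs]; apply mul_le_mul_of_nonneg_right _ hq.le; linarith
      -- one step
      have step : F * (1 - m / s) ≤ G := by
        have h3 : F * (1 - m / s) * ((k + i + 1) * (1 - p)) ≤ G * ((k + i + 1) * (1 - p)) := by
          rw [hr, mul_assoc]
          apply mul_le_mul_of_nonneg_left _ hfi
          have h4 : (m : ℝ) ≤ m / s * ((k + i + 1) * (1 - p)) := by
            calc (m : ℝ) = m / s * s := by field_simp
              _ ≤ _ := by gcongr
          nlinarith
        exact le_of_mul_le_mul_right h3 hD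
      have hms : (m : ℝ) / s ≤ 1 := by
        rw [div_le_one hs0]
        by_contra hcon
        push Not at hcon
        have : (1:ℝ) ≤ m := by linarith
        nlinarith
      have hms0 : 0 ≤ (m : ℝ) / s := by positivity
      calc f * (1 - (i + 1) * m / s) ≤ f * (1 - i * m / s) * (1 - m / s) := by
            rw [mul_assoc]
            apply mul_le_mul_of_nonneg_left _ hf
            have : 0 ≤ (i : ℝ) * (m / s) * (m / s) := by positivity
            have e1 : ((i : ℝ) + 1) * m / s = i * (m / s) + m / s := by ring
            have e2 : (i : ℝ) * m / s = i * (m / s) := by ring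
            rw [e1, e2]; nlinarith
        _ ≤ F * (1 - m / s) := by
            apply mul_le_mul_of_nonneg_right ih; linarith
        _ ≤ G := step
  have hsum := bp_sum h0 h1 n k (m + 1)
  have hlow : ((m + 1 : ℕ) : ℝ) * (binProb p n k / 2) ≤ ∑ i ∈ Finset.range (m + 1), binProb p n (k + i) := by
    rw [← nsmul_eq_mul]
    have := Finset.card_nsmul_le_sum (Finset.range (m + 1)) (fun i => binProb p n (k + i))
      (binProb p n k / 2) ?_
    · simpa using this
    · intro i hi
      have hi : i ≤ m := by simp at hi; omega
      refine le_trans ?_ (key i hi)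
      rw [div_eq_mul_one_div]
      apply mul_le_mul_of_nonneg_left _ (bp_nonneg h0 h1 n k)
      have : (i : ℝ) * m / s ≤ 1 / 2 := by
        rw [div_le_iff₀ hs0]
        have : (i : ℝ) ≤ m := by exact_mod_cast hi
        nlinarith
      linarith
  have hf := bp_nonneg h0 h1 n k
  rw [le_div_iff₀ (Real.sqrt_pos.mpr (by positivity))]
  push_cast at hlow
  nlinarith

lemma bp_ratio {p : ℝ} (h0 : 1 / 2 ≤ p) (h1 : p < 1) (N a : ℝ) (hN : 1 ≤ N)
    (ha : 0 < a) (ha' : a ≤ N * (1 - p)) :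
    (N * (1 - p) - a + 1) * p ≤ (N * p + a) * (1 - p) *
      Real.exp (4 / (p * (1 - p)) / N - (2 * a + 1) / (2 * (N * p * (1 - p)))) := by
  obtain ⟨q, hq⟩ : ∃ q, 1 - p = q := ⟨_, rfl⟩
  rw [hq] at ha' ⊢
  have hq0 : 0 < q := by linarith
  have hp0 : 0 < p := by linarith
  have hN0 : 0 < N := by linarith
  set u := (a - 1) / (N * q) with hu
  set v := a / (N * p) with hv
  have e1 : (N * q - a + 1) * p = N * p * q * (1 - u) := by rw [hu]; field_simp; ring
  have e2 : (N * p + a) * q = N * p * q * (1 + v) := by rw [hv]; field_simp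
  rw [e1, e2, mul_assoc (N * p * q)]
  apply mul_le_mul_of_nonneg_left _ (by positivity)
  have hv0 : 0 < v := by positivity
  set t := 1 / (N * q) with ht
  set r := 1 / (N * p * q) with hr
  have ht0 : 0 < t := by positivity
  have hr0 : 0 < r := by positivity
  have htr : t ≤ r := by
    have : t = p * r := by rw [ht, hr]; field_simp
    rw [this]; nlinarith
  have e3 : 4 / (p * q) / N - (2 * a + 1) / (2 * (N * p * q)) = 4 * r - (a * r + r / 2) := by
    rw [hr]; field_simp
  have e4 : u + v = a * r - t := by
    rw [hu, hv, hr, ht]; field_simp; rw [← hq]; ring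
  rw [e3]
  rcases lt_or_ge a 1 with h | h
  · have hu1 : -t ≤ u := by
      have : u = a * t - t := by rw [hu, ht]; ring
      have : 0 < a * t := by positivity
      linarith
    have h2 : a * r ≤ r := by nlinarith
    have h3 := Real.add_one_le_exp (4 * r - (a * r + r / 2))
    nlinarith [Real.exp_pos (4 * r - (a * r + r / 2))]
  · have hu0 : 0 ≤ u := by apply div_nonneg; linarith; positivity
    have hu1 : u < 1 := by rw [hu, div_lt_one (by positivity)]; linarith
    have hv1 : v ≤ 1 := by
      rw [hv, div_le_one (by positivity)]; nlinarith
    have hvu : v ≤ u + t := by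
      have : u + t = a / (N * q) := by rw [hu, ht]; ring
      rw [this, hv]
      apply div_le_div_of_nonneg_left ha.le (by positivity)
      nlinarith
    have h5 : (v - u) * (v + u) ≤ t * 2 := by
      have : (v - u) * (v + u) ≤ t * (v + u) := by
        apply mul_le_mul_of_nonneg_right _ (by linarith); linarith
      nlinarith
    have l1 : v - v ^ 2 / 2 ≤ Real.log (1 + v) := by
      refine le_trans ?_ (Real.le_log_one_add_of_nonneg hv0.le)
      rw [le_div_iff₀ (by linarith)]
      nlinarith [pow_pos hv0 3]
    have l2 : Real.log (1 - u) ≤ - u - u ^ 2 / 2 := by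
      have h1u : 0 < 1 - u := by linarith
      have h6 := Real.le_log_one_add_of_nonneg (show 0 ≤ u / (1 - u) by positivity)
      have e5 : 1 + u / (1 - u) = (1 - u)⁻¹ := by field_simp; ring
      have e6 : 2 * (u / (1 - u)) / (u / (1 - u) + 2) = 2 * u / (2 - u) := by
        have : 2 - u ≠ 0 := by linarith
        have : u + 2 * (1 - u) ≠ 0 := by intro hh; linarith
        field_simp; ring
      rw [e5, e6, Real.log_inv] at h6
      have h7 : u + u ^ 2 / 2 ≤ 2 * u / (2 - u) := by
        rw [le_div_iff₀ (by linarith)]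
        nlinarith [pow_nonneg hu0 3]
      linarith
    have h8 : Real.log (1 - u) ≤ Real.log (1 + v) + (4 * r - (a * r + r / 2)) := by
      nlinarith
    calc 1 - u = Real.exp (Real.log (1 - u)) := (Real.exp_log (by linarith)).symm
      _ ≤ Real.exp (Real.log (1 + v) + (4 * r - (a * r + r / 2))) := Real.exp_le_exp.mpr h8
      _ = _ := by rw [Real.exp_add, Real.exp_log (by linarith)]

lemma bp_main {p : ℝ} (h0 : 1 / 2 ≤ p) (h1 : p < 1) (n k₀ : ℕ) (hn : 1 ≤ n)
    (hk : (n : ℝ) * p < k₀ + 1) (i : ℕ) (hi : k₀ + i ≤ n) :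
    binProb p n (k₀ + i) ≤ binProb p n k₀ *
      Real.exp (i * (4 / (p * (1 - p)) / n) + ((k₀ + 1 - n * p) ^ 2 - (k₀ + i + 1 - n * p) ^ 2)
        / (2 * (n * p * (1 - p)))) := by
  have hq : 0 < 1 - p := by linarith
  have hp0 : 0 < p := by linarith
  have hn' : (1 : ℝ) ≤ n := by exact_mod_cast hn
  have hn0 : (0 : ℝ) < n := by linarith
  induction i with
  | zero => simp
  | succ i ih =>
    have ih := ih (by omega)
    have hi' : (k₀ : ℝ) + i + 1 ≤ n := by exact_mod_cast hi
    have hi0 : (0 : ℝ) ≤ i := Nat.cast_nonneg i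
    have hR := bp_ratio h0 h1 n (k₀ + i + 1 - n * p) hn' (by linarith) (by linarith)
    have hr := bp_rec (p := p) n (k₀ + i)
    have hfi := bp_nonneg hp0 h1 n (k₀ + i)
    have hD : 0 < ((k₀ : ℝ) + i + 1) * (1 - p) := by positivity
    rw [← add_assoc]
    push_cast at hr ⊢
    set F := binProb p n (k₀ + i)
    set G := binProb p n (k₀ + i + 1)
    set E := Real.exp (4 / (p * (1 - p)) / n
      - (2 * ((k₀ : ℝ) + i + 1 - n * p) + 1) / (2 * (n * p * (1 - p)))) with hE
    have step : G ≤ F * E := by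
      refine le_of_mul_le_mul_right ?_ hD
      rw [hr]
      calc F * ((n - (k₀ + i)) * p)
          = F * ((n * (1 - p) - (k₀ + i + 1 - n * p) + 1) * p) := by ring
        _ ≤ F * ((n * p + (k₀ + i + 1 - n * p)) * (1 - p) * E) :=
            mul_le_mul_of_nonneg_left hR hfi
        _ = _ := by ring
    refine step.trans ((mul_le_mul_of_nonneg_right ih (Real.exp_pos _).le).trans (le_of_eq ?_))
    rw [mul_assoc, ← Real.exp_add]
    congr 2
    ring

theorem binomial_right_tail_pointwise_gaussian_bound
    (p : ℝ) (hp : p ∈ Set.Ico (1 / 2 : ℝ) 1) :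
    ∃ C > (0 : ℝ), ∀ n : ℕ, 1 ≤ n → ∀ k : ℕ,
      ⌊(n : ℝ) * p⌋ ≤ (k : ℤ) → k ≤ n →
      binProb p n k ≤ C * (2 / Real.sqrt n) * normalPdf (zpt p n (k + 1)) := by
  obtain ⟨h0, h1⟩ := hp
  have hq : 0 < 1 - p := by linarith
  have hp0 : 0 < p := by linarith
  refine ⟨Real.exp (4 / (p * (1 - p)) + 1 / (2 * (p * (1 - p)))) * Real.sqrt (2 * Real.pi)
    / Real.sqrt (p * (1 - p) / 2), by positivity, ?_⟩
  intro n hn k hk hkn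
  have hn' : (1 : ℝ) ≤ n := by exact_mod_cast hn
  have hn0 : (0 : ℝ) < n := by linarith
  obtain ⟨k₀, hk₀⟩ : ∃ k₀ : ℕ, ⌊(n : ℝ) * p⌋ = (k₀ : ℤ) :=
    ⟨_, (Int.toNat_of_nonneg (Int.floor_nonneg.mpr (by positivity))).symm⟩
  rw [hk₀] at hk
  have hk : k₀ ≤ k := by exact_mod_cast hk
  obtain ⟨hl, hu⟩ := Int.floor_eq_iff.mp hk₀
  push_cast at hl hu
  obtain ⟨i, rfl⟩ := Nat.exists_eq_add_of_le hk
  have hM := bp_main h0 h1 n k₀ hn hu i hkn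
  have hS := bp_start hp0 h1 n k₀ hn hl hu
  set s := (n : ℝ) * p * (1 - p) with hs
  have hs0 : 0 < s := by positivity
  have hz : -(zpt p n ((k₀ + i : ℕ) + 1)) ^ 2 / 2 = - ((k₀ : ℝ) + i + 1 - n * p) ^ 2 / (2 * s) := by
    unfold zpt
    rw [div_pow, Real.sq_sqrt hs0.le]
    push_cast
    field_simp
  unfold normalPdf
  rw [hz]
  have hin : (i : ℝ) ≤ n := by
    have : i ≤ n := by omega
    exact_mod_cast this
  have hexp : (i : ℝ) * (4 / (p * (1 - p)) / n) + ((k₀ + 1 - n * p) ^ 2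
      - (k₀ + i + 1 - n * p) ^ 2) / (2 * s) ≤
      (4 / (p * (1 - p)) + 1 / (2 * (p * (1 - p)))) + - ((k₀ : ℝ) + i + 1 - n * p) ^ 2 / (2 * s) := by
    have a1 : (i : ℝ) * (4 / (p * (1 - p)) / n) ≤ 4 / (p * (1 - p)) := by
      calc (i : ℝ) * (4 / (p * (1 - p)) / n) ≤ n * (4 / (p * (1 - p)) / n) := by gcongr
        _ = _ := by field_simp
    have a2 : ((k₀ : ℝ) + 1 - n * p) ^ 2 / (2 * s) ≤ 1 / (2 * (p * (1 - p))) := by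
      apply div_le_div₀ (by norm_num) _ (by positivity)
      · have : 0 < p * (1 - p) := by positivity
        rw [hs]; nlinarith
      · nlinarith
    rw [sub_div, neg_div]; linarith
  refine hM.trans ?_
  refine (mul_le_mul hS (Real.exp_le_exp.mpr hexp) (Real.exp_pos _).le (by positivity)).trans
    (le_of_eq ?_)
  rw [Real.exp_add, Real.sqrt_mul hn0.le]
  have : 0 < Real.sqrt (2 * Real.pi) := by positivity
  have : 0 < Real.sqrt (p * (1 - p) / 2) := by positivity
  have : 0 < Real.sqrt (n : ℝ) := by positivity
  generalize Real.sqrt (2 * Real.pi) = A at *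
  generalize Real.sqrt (p * (1 - p) / 2) = B at *
  generalize Real.sqrt (n : ℝ) = D at *
  generalize Real.exp (4 / (p * (1 - p)) + 1 / (2 * (p * (1 - p)))) = X at *
  generalize Real.exp (- ((k₀ : ℝ) + i + 1 - n * p) ^ 2 / (2 * s)) = Y at *
  field_simp
end

section
/- For n ≥ 1 set b_n = n · log(cosh(1/(2√n))). Then the sequence (b_n) is increasing in n and converges to 1/8 as n → ∞. -/
open Filter

/-- `b_n = n · log cosh(1/(2√n))`, the normalizing constant of the martingale measure
density in the symmetric binomial approximation of the Black–Scholes model. -/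
noncomputable def bSym (n : ℕ) : ℝ := n * Real.log (Real.cosh (1 / (2 * Real.sqrt n)))

lemma aux_g_pos (x : ℝ) (hx : 0 < x) :
    0 < 2 * Real.log (Real.cosh x) - x * (Real.sinh x / Real.cosh x) := by
  have hd : ∀ y : ℝ, HasDerivAt
      (fun x => 2 * Real.log (Real.cosh x) - x * (Real.sinh x / Real.cosh x))
      ((Real.sinh y * Real.cosh y - y) / Real.cosh y ^ 2) y := by
    intro y
    have hc := (Real.cosh_pos y).ne'
    have h1 := ((Real.hasDerivAt_cosh y).log hc).const_mul 2
    have h2 := (hasDerivAt_id y).mul ((Real.hasDerivAt_sinh y).div (Real.hasDerivAt_cosh y) hc)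
    refine HasDerivAt.congr_deriv (h1.sub h2) ?_
    have := Real.cosh_sq y
    simp only [id, Pi.div_apply]
    field_simp
    rw [this]
    ring
  have hm : StrictMonoOn
      (fun x => 2 * Real.log (Real.cosh x) - x * (Real.sinh x / Real.cosh x)) (Set.Ici 0) := by
    apply strictMonoOn_of_deriv_pos (convex_Ici 0)
    · exact fun y _ => (hd y).continuousAt.continuousWithinAt
    · intro y hy
      rw [interior_Ici] at hy
      have hy' : 0 < y := hy
      rw [(hd y).deriv]
      have h1 : y < Real.sinh y := Real.self_lt_sinh_iff.2 hy'
      have h2 := Real.one_le_cosh y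
      have h3 := Real.cosh_pos y
      apply div_pos _ (by positivity)
      nlinarith
  have := hm (Set.mem_Ici.2 le_rfl) (Set.mem_Ici.2 hx.le) hx
  simpa using this

lemma aux_anti : StrictAntiOn (fun x : ℝ => Real.log (Real.cosh x) / x ^ 2) (Set.Ioi 0) := by
  have hd : ∀ y : ℝ, 0 < y → HasDerivAt (fun x : ℝ => Real.log (Real.cosh x) / x ^ 2)
      (-(2 * Real.log (Real.cosh y) - y * (Real.sinh y / Real.cosh y)) / y ^ 3) y := by
    intro y hy
    have hc := (Real.cosh_pos y).ne'
    have h1 := ((Real.hasDerivAt_cosh y).log hc).div (hasDerivAt_pow 2 y) (by positivity)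
    refine HasDerivAt.congr_deriv h1 ?_
    field_simp
    push_cast
    ring
  apply strictAntiOn_of_deriv_neg (convex_Ioi 0)
  · exact fun y hy => (hd y hy).continuousAt.continuousWithinAt
  · intro y hy
    rw [interior_Ioi] at hy
    have hy' : 0 < y := hy
    rw [(hd y hy').deriv]
    exact div_neg_of_neg_of_pos (neg_neg_of_pos (aux_g_pos y hy')) (by positivity)

lemma aux_sq (n : ℕ) : (1 / (2 * Real.sqrt n)) ^ 2 = 1 / (4 * (n : ℝ)) := by
  rw [div_pow, mul_pow, Real.sq_sqrt (Nat.cast_nonneg n)]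
  norm_num

lemma aux_b (n : ℕ) (hn : 1 ≤ n) : bSym n =
    (Real.log (Real.cosh (1 / (2 * Real.sqrt n))) / (1 / (2 * Real.sqrt n)) ^ 2) / 4 := by
  have : (0 : ℝ) < n := by exact_mod_cast hn
  rw [aux_sq, bSym]
  field_simp

lemma aux_cosh (x : ℝ) (hx : 0 ≤ x) : 1 + x ^ 2 / 2 ≤ Real.cosh x := by
  have h1 : x / 2 ≤ Real.sinh (x / 2) := Real.self_le_sinh_iff.2 (by positivity)
  have h2 := Real.cosh_two_mul (x / 2)
  have h3 := Real.cosh_sq (x / 2)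
  rw [show 2 * (x / 2) = x by ring] at h2
  nlinarith

theorem bSym_increasing_tendsto_one_eighth :
    (∀ m n : ℕ, 1 ≤ m → m < n → bSym m < bSym n) ∧
    Tendsto bSym atTop (nhds (1 / 8)) := by
  constructor
  · intro m n hm hmn
    have hm0 : (0 : ℝ) < m := by exact_mod_cast hm
    have hmn' : (m : ℝ) < n := by exact_mod_cast hmn
    have hn0 : (0 : ℝ) < n := hm0.trans hmn'
    rw [aux_b m hm, aux_b n (by omega)]
    apply div_lt_div_of_pos_right _ (by norm_num)
    have hs := Real.sqrt_lt_sqrt hm0.le hmn'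
    have hs0 := Real.sqrt_pos.2 hm0
    have hs1 := Real.sqrt_pos.2 hn0
    refine aux_anti (Set.mem_Ioi.2 (by positivity)) (Set.mem_Ioi.2 (by positivity)) ?_
    exact one_div_lt_one_div_of_lt (by positivity) (by linarith)
  · have hl : Tendsto (fun n : ℕ => 1 / (8 + 1 / (n : ℝ))) atTop (nhds (1 / 8)) := by
      have := (tendsto_one_div_atTop_nhds_zero_nat (𝕜 := ℝ)).const_add 8
      rw [add_zero] at this
      exact tendsto_const_nhds.div this (by norm_num)
    refine tendsto_of_tendsto_of_tendsto_of_le_of_le' hl tendsto_const_nhds ?_ ?_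
    · filter_upwards [eventually_ge_atTop 1] with n hn
      have hn0 : (0 : ℝ) < n := by exact_mod_cast hn
      have h1 := aux_cosh (1 / (2 * Real.sqrt n)) (by positivity)
      rw [aux_sq] at h1
      have h2 := Real.log_le_log (by positivity) h1
      have h3 := Real.one_sub_inv_le_log_of_pos
        (show (0 : ℝ) < 1 + 1 / (4 * (n : ℝ)) / 2 by positivity)
      have h4 := mul_le_mul_of_nonneg_left (h3.trans h2) hn0.le
      refine le_trans (le_of_eq ?_) h4
      field_simp
      ring
    · filter_upwards [eventually_ge_atTop 1] with n hn
      have hn0 : (0 : ℝ) < n := by exact_mod_cast hn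
      have h1 := Real.log_le_log (Real.cosh_pos _)
        (Real.cosh_le_exp_half_sq (1 / (2 * Real.sqrt n)))
      rw [Real.log_exp, aux_sq] at h1
      have h4 := mul_le_mul_of_nonneg_left h1 hn0.le
      refine le_trans h4 (le_of_eq ?_)
      field_simp
      norm_num
end

section
/- Let p = 1/2, so that f_{n,k} = (n choose k)·2^{−n} and z_{n,k} = (2k − n)/√n. Then lim_{n→∞} √n · f_{n,⌊n/2⌋} / (2 · φ(z_{n,⌊n/2⌋+1})) = 1. -/
open MeasureTheory Filter

lemma aux_central (m : ℕ) (hm : m ≠ 0) :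
    Stirling.stirlingSeq (2 * m) / Stirling.stirlingSeq m ^ 2
      = Real.sqrt m * ((2 * m).choose m : ℝ) / 4 ^ m := by
  have hc : ((2 * m).choose m : ℝ) = ((2 * m).factorial : ℝ) / (m.factorial * m.factorial) := by
    rw [Nat.cast_choose ℝ (by omega : m ≤ 2 * m)]
    congr 4
    omega
  have hm0 : (0 : ℝ) < m := by positivity
  have h1 : Real.sqrt (2 * ((2 * m : ℕ) : ℝ)) = 2 * Real.sqrt m := by
    rw [show (2 * ((2 * m : ℕ) : ℝ)) = 2 ^ 2 * m by push_cast; ring,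
      Real.sqrt_mul (by positivity), Real.sqrt_sq (by norm_num)]
  have h2 : Real.sqrt (2 * (m : ℝ)) ^ 2 = 2 * m := Real.sq_sqrt (by positivity)
  have h3 : (((2 * m : ℕ) : ℝ) / Real.exp 1) ^ (2 * m) = 4 ^ m * ((m / Real.exp 1) ^ m) ^ 2 := by
    push_cast
    rw [mul_div_assoc, mul_pow, pow_mul, mul_comm 2 m, pow_mul _ m 2]
    norm_num
  have h4 : Real.sqrt (m : ℝ) ^ 2 = m := Real.sq_sqrt hm0.le
  have hs : 0 < Real.sqrt (m : ℝ) := Real.sqrt_pos.2 hm0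
  have hf : (0 : ℝ) < m.factorial := by positivity
  have hE : 0 < ((m : ℝ) / Real.exp 1) ^ m := by positivity
  unfold Stirling.stirlingSeq
  rw [h1, h3, hc, div_pow (m.factorial : ℝ), mul_pow (Real.sqrt (2 * (m : ℝ))), h2]
  generalize ((m : ℝ) / Real.exp 1) ^ m = E at *
  generalize Real.sqrt (m : ℝ) = s at *
  rw [← h4]
  field_simp

lemma aux_prob (n : ℕ) : binProb (1 / 2) n (n / 2)
    = ((2 * ((n + 1) / 2)).choose ((n + 1) / 2) : ℝ) / 4 ^ ((n + 1) / 2) := by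
  have h0 : binProb (1 / 2) n (n / 2) = (n.choose (n / 2) : ℝ) / 2 ^ n := by
    unfold binProb
    rw [show (1 - 1 / 2 : ℝ) = 1 / 2 by norm_num, mul_assoc, ← pow_add,
      Nat.add_sub_cancel' (Nat.div_le_self n 2), one_div, inv_pow]
    rfl
  rw [h0]
  rcases Nat.even_or_odd' n with ⟨m, rfl | rfl⟩
  · rw [show (2 * m + 1) / 2 = m by omega, show 2 * m / 2 = m by omega, pow_mul]
    norm_num
  · rw [show (2 * m + 1 + 1) / 2 = m + 1 by omega, show (2 * m + 1) / 2 = m by omega]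
    have h : (2 * (m + 1)).choose (m + 1) = 2 * (2 * m + 1).choose m := by
      rw [show 2 * (m + 1) = (2 * m + 1) + 1 by ring, Nat.choose_succ_succ,
        Nat.choose_symm_half]
      ring
    rw [h, pow_succ, pow_succ, pow_mul]
    push_cast
    norm_num
    field_simp
    norm_num

lemma aux_half : Tendsto (fun n : ℕ => (n + 1) / 2) atTop atTop :=
  tendsto_atTop.2 fun b => by
    filter_upwards [eventually_ge_atTop (2 * b)] with n hn
    omega

lemma aux_num : Tendsto (fun n : ℕ => Real.sqrt n * binProb (1 / 2) n (n / 2)) atTop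
    (nhds (Real.sqrt 2 * (Real.sqrt Real.pi / Real.sqrt Real.pi ^ 2))) := by
  have hS := Stirling.tendsto_stirlingSeq_sqrt_pi
  have h2m : Tendsto (fun m : ℕ => 2 * m) atTop atTop :=
    tendsto_id.const_mul_atTop' (by norm_num)
  have hpi : Real.sqrt Real.pi ^ 2 ≠ 0 := by
    have := Real.pi_pos
    positivity
  have h1 := ((hS.comp h2m).div (hS.pow 2) hpi).comp aux_half
  have hr : Tendsto (fun n : ℕ => (n : ℝ) / (((n + 1) / 2 : ℕ) : ℝ)) atTop (nhds 2) := by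
    have hl : Tendsto (fun n : ℕ => 2 * ((n : ℝ) / (n + 1))) atTop (nhds 2) := by
      simpa using (tendsto_natCast_div_add_atTop (1 : ℝ)).const_mul 2
    refine tendsto_of_tendsto_of_tendsto_of_le_of_le' hl tendsto_const_nhds ?_ ?_
    · filter_upwards [eventually_ge_atTop 1] with n hn
      have hm : 0 < (n + 1) / 2 := by omega
      have hm' : (0 : ℝ) < (((n + 1) / 2 : ℕ) : ℝ) := by exact_mod_cast hm
      have h : 2 * (((n + 1) / 2 : ℕ) : ℝ) ≤ n + 1 := by
        exact_mod_cast (by omega : 2 * ((n + 1) / 2) ≤ n + 1)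
      rw [← mul_div_assoc, div_le_div_iff₀ (by positivity) hm']
      have : (0 : ℝ) ≤ n := by positivity
      nlinarith
    · filter_upwards [eventually_ge_atTop 1] with n hn
      have hm : 0 < (n + 1) / 2 := by omega
      have hm' : (0 : ℝ) < (((n + 1) / 2 : ℕ) : ℝ) := by exact_mod_cast hm
      rw [div_le_iff₀ hm']
      exact_mod_cast (by omega : n ≤ 2 * ((n + 1) / 2))
  refine (hr.sqrt.mul h1).congr' ?_
  filter_upwards [eventually_ge_atTop 1] with n hn
  have hm : 0 < (n + 1) / 2 := by omega
  have hm' : (0 : ℝ) < (((n + 1) / 2 : ℕ) : ℝ) := by exact_mod_cast hm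
  have hs := Real.sqrt_pos.2 hm'
  have := aux_central _ hm.ne'
  simp only [Function.comp, Pi.div_apply]
  rw [this, aux_prob, Real.sqrt_div (by positivity)]
  field_simp

lemma aux_z : Tendsto (fun n : ℕ => zpt (1 / 2) n ((n / 2 : ℕ) + 1)) atTop (nhds 0) := by
  have h0 : Tendsto (fun n : ℕ => 1 / Real.sqrt (n * (1 / 2) * (1 - 1 / 2))) atTop (nhds 0) := by
    have h : Tendsto (fun n : ℕ => Real.sqrt ((n : ℝ) * (1 / 2) * (1 - 1 / 2))) atTop atTop := by
      refine Real.tendsto_sqrt_atTop.comp ?_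
      exact (tendsto_natCast_atTop_atTop.atTop_mul_const (by norm_num)).atTop_mul_const
        (by norm_num)
    exact h.inv_tendsto_atTop.congr fun n => by simp only [Pi.inv_apply, one_div]
  refine squeeze_zero (fun n => ?_) (fun n => ?_) h0
  all_goals
    unfold zpt
    rw [Int.cast_add, Int.cast_natCast, Int.cast_one]
  · have h : (n : ℝ) ≤ 2 * ((n / 2 : ℕ) : ℝ) + 1 := by
      exact_mod_cast (by omega : n ≤ 2 * (n / 2) + 1)
    apply div_nonneg _ (Real.sqrt_nonneg _)

    linarith
  · have h : 2 * ((n / 2 : ℕ) : ℝ) ≤ n := by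
      exact_mod_cast (by omega : 2 * (n / 2) ≤ n)
    apply div_le_div_of_nonneg_right _ (Real.sqrt_nonneg _)
    linarith

theorem central_binomial_ratio_tendsto_one :
    Tendsto (fun n : ℕ =>
        Real.sqrt n * binProb (1 / 2) n (n / 2) /
          (2 * normalPdf (zpt (1 / 2) n ((n / 2 : ℕ) + 1))))
      atTop (nhds 1) := by
  have hc : Continuous normalPdf := by
    unfold normalPdf
    fun_prop
  have hd := ((hc.tendsto 0).comp aux_z).const_mul 2
  have hv : (2 : ℝ) * normalPdf 0 = Real.sqrt 2 * (Real.sqrt Real.pi / Real.sqrt Real.pi ^ 2) := by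
    have h1 : 0 < Real.sqrt Real.pi := Real.sqrt_pos.2 Real.pi_pos
    have h2 : Real.sqrt 2 ^ 2 = 2 := Real.sq_sqrt (by norm_num)
    have h3 : 0 < Real.sqrt 2 := by positivity
    simp only [normalPdf]
    rw [Real.sqrt_mul (by norm_num)]
    norm_num
    field_simp
    linarith
  have hne : (2 : ℝ) * normalPdf 0 ≠ 0 := by
    have := Real.pi_pos
    unfold normalPdf
    positivity
  have := aux_num.div hd hne
  rw [← hv, div_self hne] at this
  exact this
end

section
/- Let α(w) = −w·log w − (1−w)·log(1−w) − 2w(1−w) + 1/2 − log 2 for w ∈ (0,1). Then α(1/2) = α'(1/2) = α''(1/2) = α'''(1/2) = 0, the fourth derivative satisfies α''''(w) = −2/(1−w)³ − 2/w³ < 0 for w ∈ (1/2, 1), and consequently each of the functions α''', α'', α', and α is strictly negative and strictly decreasing on (1/2, 1). -/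
/-- The exponential-rate function in the symmetric binomial-vs-Gaussian comparison. -/
noncomputable def αSym (w : ℝ) : ℝ :=
  -w * Real.log w - (1 - w) * Real.log (1 - w) - 2 * w * (1 - w) + 1 / 2 - Real.log 2

theorem anti_aux (f g : ℝ → ℝ) (hf : ∀ w ∈ Set.Ioo (0 : ℝ) 1, HasDerivAt f (g w) w)
    (h0 : f (1 / 2) = 0) (hg : ∀ w ∈ Set.Ioo (1 / 2 : ℝ) 1, g w < 0) :
    (∀ w ∈ Set.Ioo (1 / 2 : ℝ) 1, f w < 0) ∧ StrictAntiOn f (Set.Ioo (1 / 2 : ℝ) 1) := by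
  have key : StrictAntiOn f (Set.Ico (1 / 2 : ℝ) 1) := by
    apply strictAntiOn_of_deriv_neg (convex_Ico _ _)
    · intro w hw
      exact (hf w ⟨by linarith [hw.1], hw.2⟩).continuousAt.continuousWithinAt
    · intro w hw
      rw [interior_Ico] at hw
      rw [(hf w ⟨by linarith [hw.1], hw.2⟩).deriv]
      exact hg w hw
  refine ⟨fun w hw => ?_, key.mono Set.Ioo_subset_Ico_self⟩
  rw [← h0]
  exact key ⟨le_refl _, by norm_num⟩ ⟨hw.1.le, hw.2⟩ hw.1

theorem deriv_aux (f g g' : ℝ → ℝ) (hf : ∀ w ∈ Set.Ioo (0 : ℝ) 1, f w = g w)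
    (hg : ∀ w ∈ Set.Ioo (0 : ℝ) 1, HasDerivAt g (g' w) w) :
    ∀ w ∈ Set.Ioo (0 : ℝ) 1, HasDerivAt f (g' w) w := by
  intro w hw
  refine (hg w hw).congr_of_eventuallyEq ?_
  filter_upwards [isOpen_Ioo.mem_nhds hw] with x hx using hf x hx

theorem rate_function_derivatives_symmetric :
    αSym (1 / 2) = 0 ∧ deriv αSym (1 / 2) = 0 ∧
    deriv^[2] αSym (1 / 2) = 0 ∧ deriv^[3] αSym (1 / 2) = 0 ∧
    (∀ w ∈ Set.Ioo (1 / 2 : ℝ) 1,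
      deriv^[4] αSym w = -2 / (1 - w) ^ 3 - 2 / w ^ 3 ∧ deriv^[4] αSym w < 0) ∧
    (∀ w ∈ Set.Ioo (1 / 2 : ℝ) 1, deriv^[3] αSym w < 0) ∧
    StrictAntiOn (deriv^[3] αSym) (Set.Ioo (1 / 2 : ℝ) 1) ∧
    (∀ w ∈ Set.Ioo (1 / 2 : ℝ) 1, deriv^[2] αSym w < 0) ∧
    StrictAntiOn (deriv^[2] αSym) (Set.Ioo (1 / 2 : ℝ) 1) ∧
    (∀ w ∈ Set.Ioo (1 / 2 : ℝ) 1, deriv αSym w < 0) ∧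
    StrictAntiOn (deriv αSym) (Set.Ioo (1 / 2 : ℝ) 1) ∧
    (∀ w ∈ Set.Ioo (1 / 2 : ℝ) 1, αSym w < 0) ∧
    StrictAntiOn αSym (Set.Ioo (1 / 2 : ℝ) 1) := by
  have d1 : ∀ w ∈ Set.Ioo (0 : ℝ) 1,
      HasDerivAt αSym (-Real.log w + Real.log (1 - w) - 2 + 4 * w) w := by
    intro w hw
    have h1 : w ≠ 0 := hw.1.ne'
    have h2 : 1 - w ≠ 0 := by linarith [hw.2]
    have hi := hasDerivAt_id w
    have hs := hi.const_sub 1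
    have h := (((((hi.neg.mul (hi.log h1)).sub (hs.mul (hs.log h2))).sub
      ((hi.const_mul 2).mul hs)).add_const (1 / 2)).sub_const (Real.log 2))
    refine (h.congr_deriv ?_).congr_of_eventuallyEq (Filter.Eventually.of_forall fun x => ?_)
    · simp only [id]
      field_simp
      simp
      ring
    · simp [αSym]
  have d2 : ∀ w ∈ Set.Ioo (0 : ℝ) 1,
      HasDerivAt (deriv αSym) (-1 / w - 1 / (1 - w) + 4) w := by
    refine deriv_aux _ (fun w => -Real.log w + Real.log (1 - w) - 2 + 4 * w) _
      (fun w hw => (d1 w hw).deriv) ?_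
    intro w hw
    have h1 : w ≠ 0 := hw.1.ne'
    have h2 : 1 - w ≠ 0 := by linarith [hw.2]
    have hi := hasDerivAt_id w
    have hs := hi.const_sub 1
    have h := ((((hi.log h1).neg.add (hs.log h2)).sub_const 2).add (hi.const_mul 4))
    refine h.congr_deriv ?_
    simp only [id]
    ring
  have d3 : ∀ w ∈ Set.Ioo (0 : ℝ) 1,
      HasDerivAt (deriv^[2] αSym) (1 / w ^ 2 - 1 / (1 - w) ^ 2) w := by
    refine deriv_aux _ (fun w => -w⁻¹ - (1 - w)⁻¹ + 4) _
      (fun w hw => ((d2 w hw).deriv.trans (by ring))) ?_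
    intro w hw
    have h1 : w ≠ 0 := hw.1.ne'
    have h2 : 1 - w ≠ 0 := by linarith [hw.2]
    have hi := hasDerivAt_id w
    have hs := hi.const_sub 1
    have h := ((hi.inv h1).neg.sub (hs.inv h2)).add_const 4
    refine h.congr_deriv ?_
    simp only [id]
    ring
  have d4 : ∀ w ∈ Set.Ioo (0 : ℝ) 1,
      HasDerivAt (deriv^[3] αSym) (-2 / (1 - w) ^ 3 - 2 / w ^ 3) w := by
    refine deriv_aux _ (fun w => (w ^ 2)⁻¹ - ((1 - w) ^ 2)⁻¹) _
      (fun w hw => ?_) ?_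
    · rw [Function.iterate_succ_apply', (d3 w hw).deriv]
      ring
    intro w hw
    have h1 : w ≠ 0 := hw.1.ne'
    have h2 : 1 - w ≠ 0 := by linarith [hw.2]
    have hi := hasDerivAt_id w
    have hs := hi.const_sub 1
    have h := ((hi.pow 2).inv (pow_ne_zero 2 h1)).sub ((hs.pow 2).inv (pow_ne_zero 2 h2))
    refine h.congr_deriv ?_
    simp only [id, Pi.pow_apply]
    field_simp
    ring
  have e2 : ∀ w ∈ Set.Ioo (0 : ℝ) 1, deriv^[2] αSym w = -1 / w - 1 / (1 - w) + 4 :=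
    fun w hw => (d2 w hw).deriv
  have e3 : ∀ w ∈ Set.Ioo (0 : ℝ) 1, deriv^[3] αSym w = 1 / w ^ 2 - 1 / (1 - w) ^ 2 := by
    intro w hw
    rw [Function.iterate_succ_apply', (d3 w hw).deriv]
  have e4 : ∀ w ∈ Set.Ioo (0 : ℝ) 1,
      deriv^[4] αSym w = -2 / (1 - w) ^ 3 - 2 / w ^ 3 := by
    intro w hw
    rw [Function.iterate_succ_apply', (d4 w hw).deriv]
  have hm : (1 / 2 : ℝ) ∈ Set.Ioo (0 : ℝ) 1 := by constructor <;> norm_num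
  have hsub : ∀ w ∈ Set.Ioo (1 / 2 : ℝ) 1, w ∈ Set.Ioo (0 : ℝ) 1 :=
    fun w hw => ⟨by linarith [hw.1], hw.2⟩
  have z0 : αSym (1 / 2) = 0 := by
    have : (1 : ℝ) - 1 / 2 = 1 / 2 := by norm_num
    rw [αSym, this, one_div, Real.log_inv]
    ring
  have z1 : deriv αSym (1 / 2) = 0 := by
    have : (1 : ℝ) - 1 / 2 = 1 / 2 := by norm_num
    rw [(d1 _ hm).deriv, this]
    ring
  have z2 : deriv^[2] αSym (1 / 2) = 0 := by
    rw [e2 _ hm]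
    norm_num
  have z3 : deriv^[3] αSym (1 / 2) = 0 := by
    rw [e3 _ hm]
    norm_num
  have n4 : ∀ w ∈ Set.Ioo (1 / 2 : ℝ) 1, -2 / (1 - w) ^ 3 - 2 / w ^ 3 < 0 := by
    intro w hw
    have h1 : 0 < w := (hsub w hw).1
    have h2 : 0 < 1 - w := by linarith [hw.2]
    have h3 : 0 < 2 / (1 - w) ^ 3 := by positivity
    have h4 : 0 < 2 / w ^ 3 := by positivity
    rw [neg_div]
    linarith
  obtain ⟨a3, b3⟩ := anti_aux _ _ d4 z3 n4
  obtain ⟨a2, b2⟩ := anti_aux _ _ d3 z2 (fun w hw => e3 w (hsub w hw) ▸ a3 w hw)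
  obtain ⟨a1, b1⟩ := anti_aux _ _ d2 z1 (fun w hw => e2 w (hsub w hw) ▸ a2 w hw)
  obtain ⟨a0, b0⟩ := anti_aux _ _ d1 z0 (fun w hw => (d1 w (hsub w hw)).deriv ▸ a1 w hw)
  refine ⟨z0, z1, z2, z3, fun w hw => ⟨e4 w (hsub w hw), ?_⟩, a3, b3, a2, b2, a1, b1, a0, b0⟩
  rw [e4 w (hsub w hw)]
  exact n4 w hw
end

section
/- Let p ∈ (1/2, 1) and for n ≥ 1 define a_n = (√n/(z_{1,1} − z_{1,0})) · log( (p/(1−p)) · (exp(z_{1,1}/√n) − 1)/(1 − exp(z_{1,0}/√n)) ), where z_{1,0} = −√(p/(1−p)) and z_{1,1} = √((1−p)/p). Then a_n = 1/2 − ((2p − 1)/(24·√(p(1−p))))·n^{−1/2} + O(n^{−1}) as n → ∞; that is, there exist C > 0 and n₀ such that |a_n − 1/2 + ((2p − 1)/(24·√(p(1−p))))·n^{−1/2}| ≤ C/n for all n ≥ n₀. -/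
open MeasureTheory Filter

lemma log_expm1_bound (x : ℝ) (hx0 : x ≠ 0) (hx : |x| ≤ 1 / 2) :
    |Real.log ((Real.exp x - 1) / x) - x / 2 - x ^ 2 / 24| ≤ 3 * |x| ^ 3 := by
  have ha : 0 < |x| := abs_pos.mpr hx0
  have h1 := Real.exp_bound (x := x) (by linarith) (n := 4) (by norm_num)
  simp only [Finset.sum_range_succ, Finset.sum_range_zero, Nat.factorial] at h1
  norm_num at h1
  obtain ⟨r, hr⟩ : ∃ r, r = (Real.exp x - 1) / x - 1 - x / 2 - x ^ 2 / 6 := ⟨_, rfl⟩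
  have hr' : Real.exp x - (1 + x + x ^ 2 / 2 + x ^ 3 / 6) = x * r := by
    rw [hr]; field_simp; ring
  rw [hr', abs_mul] at h1
  have hrb : |r| ≤ |x| ^ 3 * (5 / 96) := by
    have : |x| * |r| ≤ |x| * (|x| ^ 3 * (5 / 96)) := by
      rw [← abs_pow] at *
      calc _ ≤ _ := h1
        _ = _ := by rw [abs_pow, abs_pow]; ring
    exact le_of_mul_le_mul_left this ha
  obtain ⟨s, hs⟩ : ∃ s, s = (Real.exp x - 1) / x - 1 := ⟨_, rfl⟩
  have hw : (Real.exp x - 1) / x = 1 - (-s) := by rw [hs]; ring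
  have hsx : s = x / 2 + (x ^ 2 / 6 + r) := by rw [hr, hs]; ring
  have hx2 : |x| ^ 2 ≤ |x| / 2 := by nlinarith
  have hx3 : |x| ^ 3 ≤ |x| ^ 2 / 2 := by nlinarith [sq_nonneg |x|]
  have hd : |x ^ 2 / 6 + r| ≤ |x| ^ 2 / 4 := by
    have := abs_add_le (x ^ 2 / 6) r
    rw [abs_div, abs_pow, abs_of_pos (show (0:ℝ) < 6 by norm_num)] at this
    nlinarith
  have hx2' : |x / 2| = |x| / 2 := by rw [abs_div]; norm_num
  have hsb : |s| ≤ |x| := by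
    have := abs_add_le (x / 2) (x ^ 2 / 6 + r)
    rw [hsx]; linarith
  have h2 := Real.abs_log_sub_add_sum_range_le (x := -s) (by rw [abs_neg]; linarith) 2
  simp only [Finset.sum_range_succ, Finset.sum_range_zero] at h2
  norm_num at h2
  have h3 : |s| ^ 3 / (1 - |s|) ≤ 2 * |x| ^ 3 := by
    rw [div_le_iff₀ (by linarith)]
    have : |s| ^ 3 ≤ |x| ^ 3 := by gcongr
    nlinarith [pow_pos ha 3]
  have h4 : |(x ^ 2 / 6 + r) * (s + x / 2)| ≤ |x| ^ 2 / 4 * (2 * |x|) := by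
    rw [abs_mul]
    have := abs_add_le s (x / 2)
    gcongr
    linarith
  have h5 : Real.log ((Real.exp x - 1) / x) - x / 2 - x ^ 2 / 24
      = (-s + s ^ 2 / 2 + Real.log (1 + s)) + r - (x ^ 2 / 6 + r) * (s + x / 2) / 2 := by
    rw [hw, sub_neg_eq_add]
    have : x ^ 2 / 6 + r = s - x / 2 := by rw [hsx]; ring
    rw [this]
    have : r = s - x / 2 - x ^ 2 / 6 := by rw [hsx]; ring
    rw [this]; ring
  rw [h5]
  have h6 := h2.trans h3
  rw [abs_le] at h6 hrb h4 ⊢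
  have := pow_pos ha 3
  constructor <;> nlinarith

theorem aCoef_asymptotic_expansion (p : ℝ) (hp : p ∈ Set.Ioo (1 / 2 : ℝ) 1) :
    ∃ C > (0 : ℝ), ∃ n₀ : ℕ, ∀ n : ℕ, n₀ ≤ n →
      |aCoef p n - 1 / 2 + (2 * p - 1) / (24 * Real.sqrt (p * (1 - p))) / Real.sqrt n| ≤
        C / n := by
  obtain ⟨hp1, hp2⟩ := hp
  have hp0 : 0 < p := by linarith
  have hq : 0 < 1 - p := by linarith
  obtain ⟨a, ha⟩ : ∃ a, a = Real.sqrt p := ⟨_, rfl⟩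
  obtain ⟨b, hb⟩ : ∃ b, b = Real.sqrt (1 - p) := ⟨_, rfl⟩
  have ha0 : 0 < a := ha ▸ Real.sqrt_pos.mpr hp0
  have hb0 : 0 < b := hb ▸ Real.sqrt_pos.mpr hq
  have ha2 : p = a ^ 2 := by rw [ha, Real.sq_sqrt hp0.le]
  have hb2 : 1 - p = b ^ 2 := by rw [hb, Real.sq_sqrt hq.le]
  have hu : z11 p = b / a := by rw [z11, Real.sqrt_div hq.le, ha, hb]
  have hv : z10 p = -(a / b) := by rw [z10, Real.sqrt_div hp0.le, ha, hb]
  have hab : Real.sqrt (p * (1 - p)) = a * b := by rw [Real.sqrt_mul hp0.le, ha, hb]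
  obtain ⟨u, hu'⟩ : ∃ u, u = b / a := ⟨_, rfl⟩
  obtain ⟨v, hv'⟩ : ∃ v, v = a / b := ⟨_, rfl⟩
  have hu0 : 0 < u := by rw [hu']; positivity
  have hv0 : 0 < v := by rw [hv']; positivity
  have hK : (2 * p - 1) / (24 * (a * b)) = (v - u) / 24 := by
    have : 2 * p - 1 = a ^ 2 - b ^ 2 := by rw [← ha2, ← hb2]; ring
    rw [this, hu', hv']; field_simp
  have hpq : p / (1 - p) = v / u := by
    rw [hb2, ha2, hu', hv']; field_simp
  refine ⟨3 * (u ^ 3 + v ^ 3) / (u + v), by positivity, ⌈4 * u ^ 2 + 4 * v ^ 2 + 1⌉₊, ?_⟩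
  intro n hn
  have hn' : 4 * u ^ 2 + 4 * v ^ 2 + 1 ≤ (n : ℝ) := (Nat.le_ceil _).trans (by exact_mod_cast hn)
  rw [aCoef, hu, hv, hab, hK, hpq, ← hu', ← hv']
  obtain ⟨m, hm⟩ : ∃ m, m = Real.sqrt n := ⟨_, rfl⟩
  have hn0 : (0:ℝ) < n := by nlinarith [sq_nonneg u, sq_nonneg v]
  have hm0 : 0 < m := hm ▸ Real.sqrt_pos.mpr hn0
  have hm2 : (n:ℝ) = m ^ 2 := by rw [hm, Real.sq_sqrt hn0.le]
  rw [← hm, hm2]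
  rw [hm2] at hn'
  have hum : u / m ≤ 1 / 2 := by
    rw [div_le_iff₀ hm0]; nlinarith [sq_nonneg v]
  have hvm : v / m ≤ 1 / 2 := by
    rw [div_le_iff₀ hm0]; nlinarith [sq_nonneg u]
  have hum0 : 0 < u / m := by positivity
  have hvm0 : 0 < v / m := by positivity
  have e1 := log_expm1_bound (u / m) hum0.ne' (by rwa [abs_of_pos hum0])
  have e2 := log_expm1_bound (-v / m) (by rw [neg_div]; linarith)
    (by rwa [neg_div, abs_neg, abs_of_pos hvm0])
  rw [abs_of_pos hum0] at e1
  rw [show |-v / m| = v / m by rw [neg_div, abs_neg, abs_of_pos hvm0]] at e2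
  have p1 : 0 < Real.exp (u / m) - 1 := by
    have := Real.add_one_lt_exp hum0.ne'; linarith
  have p2 : 0 < 1 - Real.exp (-v / m) := by
    have : Real.exp (-v / m) < 1 := by rw [Real.exp_lt_one_iff, neg_div]; linarith
    linarith
  have hlog : Real.log (v / u * (Real.exp (u / m) - 1) / (1 - Real.exp (-v / m)))
      = Real.log ((Real.exp (u / m) - 1) / (u / m))
        - Real.log ((Real.exp (-v / m) - 1) / (-v / m)) := by
    have h : (Real.exp (-v / m) - 1) / (-v / m) = (1 - Real.exp (-v / m)) / (v / m) := by
      generalize Real.exp (-v / m) = E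
      field_simp
      ring
    rw [h, ← Real.log_div (by positivity) (by positivity)]
    congr 1
    field_simp
  rw [hlog]
  generalize Real.log ((Real.exp (u / m) - 1) / (u / m)) = L1 at *
  generalize Real.log ((Real.exp (-v / m) - 1) / (-v / m)) = L2 at *
  have key : m / (u - -v) * (L1 - L2) - 1 / 2 + (v - u) / 24 / m
      = m / (u + v) * ((L1 - u / m / 2 - (u / m) ^ 2 / 24)
        - (L2 - -v / m / 2 - (-v / m) ^ 2 / 24)) := by
    have : u + v ≠ 0 := by positivity
    rw [sub_neg_eq_add]
    field_simp
    ring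
  rw [key, abs_mul, abs_of_pos (by positivity : 0 < m / (u + v))]
  calc _ ≤ m / (u + v) * (3 * (u / m) ^ 3 + 3 * (v / m) ^ 3) := by
        gcongr
        exact (abs_sub _ _).trans (add_le_add e1 e2)
    _ = _ := by field_simp
end

section
/- Let p ∈ (1/2, 1) and for n ≥ 1 define a_n = (√n/(z_{1,1} − z_{1,0})) · log( (p/(1−p)) · (exp(z_{1,1}/√n) − 1)/(1 − exp(z_{1,0}/√n)) ) and b_n = n · log( (1−p)·exp(−z_{1,0} a_n/√n) + p·exp(−z_{1,1} a_n/√n) ), where z_{1,0} = −√(p/(1−p)) and z_{1,1} = √((1−p)/p). Then b_n = 1/8 − ((1 − p + p²)/(576·p(1−p)))·n^{−1} + O(n^{−2}) as n → ∞; that is, there exist C > 0 and n₀ such that |b_n − 1/8 + ((1 − p + p²)/(576·p(1−p)))·n^{−1}| ≤ C/n² for all n ≥ n₀. -/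
open MeasureTheory Filter

/-- `log ((e^x - 1)/x) - x/2`, the even function `log (sinh (x/2) / (x/2))`. -/
noncomputable def phiAux (x : ℝ) : ℝ := Real.log ((Real.exp x - 1) / x) - x / 2

lemma sinh_div_bound (y : ℝ) (h0 : 0 < y) (h1 : y ≤ 1 / 2) :
    |Real.sinh y / y - 1 - y ^ 2 / 6 - y ^ 4 / 120| ≤ y ^ 6 := by
  have hy : |y| = y := abs_of_pos h0
  have e1 := Real.exp_bound (x := y) (by rw [hy]; linarith) (n := 7) (by norm_num)
  have e2 := Real.exp_bound (x := -y) (by rw [abs_neg, hy]; linarith) (n := 7) (by norm_num)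
  rw [abs_neg] at e2
  rw [hy] at e1 e2
  norm_num [Finset.sum_range_succ, Nat.factorial] at e1 e2
  have h7 : 0 < y ^ 7 := by positivity
  have key : |Real.sinh y - y - y ^ 3 / 6 - y ^ 5 / 120| ≤ y ^ 7 := by
    rw [Real.sinh_eq]
    rw [abs_le] at e1 e2 ⊢
    constructor <;> nlinarith [e1.1, e1.2, e2.1, e2.2]
  have : Real.sinh y / y - 1 - y ^ 2 / 6 - y ^ 4 / 120
      = (Real.sinh y - y - y ^ 3 / 6 - y ^ 5 / 120) / y := by
    field_simp
  rw [this, abs_div, hy, div_le_iff₀ h0]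
  calc _ ≤ _ := key
    _ = _ := by ring

lemma log_sinh_bound (y : ℝ) (h0 : 0 < y) (h1 : y ≤ 1 / 2) :
    |Real.log (Real.sinh y / y) - y ^ 2 / 6 + y ^ 4 / 180| ≤ 3 * y ^ 6 := by
  have hS := sinh_div_bound y h0 h1
  obtain ⟨w, hw⟩ : ∃ w, w = Real.sinh y / y - 1 := ⟨_, rfl⟩
  have hS1 : Real.sinh y / y = 1 - (-w) := by rw [hw]; ring
  rw [hS1]
  rw [← hw] at hS
  have h2 : y ^ 2 ≤ 1 / 4 := by nlinarith
  have p2 : 0 < y ^ 2 := by positivity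
  have p4 : 0 < y ^ 4 := by positivity
  have p6 : 0 < y ^ 6 := by positivity
  have h4 : y ^ 4 ≤ y ^ 2 / 4 := by nlinarith
  have h6 : y ^ 6 ≤ y ^ 4 / 4 := by nlinarith
  have hS' := abs_le.1 hS
  have hwb : |w| ≤ y ^ 2 / 4 := by
    rw [abs_le]; constructor <;> linarith [hS'.1, hS'.2]
  have hw1 : |w| ≤ 1 / 16 := by linarith
  have hl := Real.abs_log_sub_add_sum_range_le (x := -w) (by rw [abs_neg]; linarith) 2
  rw [abs_neg] at hl
  norm_num [Finset.sum_range_succ] at hl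
  have hl2 : |w| ^ 3 / (1 - |w|) ≤ y ^ 6 := by
    rw [div_le_iff₀ (by linarith)]
    have : |w| ^ 3 ≤ (y ^ 2 / 4) ^ 3 := by gcongr
    nlinarith
  have hl3 := abs_le.1 (hl.trans hl2)
  have he : |w - y ^ 2 / 6| ≤ y ^ 4 := by
    rw [abs_le]; constructor <;> linarith [hS'.1, hS'.2]
  have hf : |w + y ^ 2 / 6| ≤ y ^ 2 := by
    have := abs_le.1 hwb
    rw [abs_le]; constructor <;> linarith
  have hq : |(w - y ^ 2 / 6) * (w + y ^ 2 / 6)| ≤ y ^ 6 := by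
    rw [abs_mul]
    calc _ ≤ y ^ 4 * y ^ 2 := by gcongr
      _ = _ := by ring
  have hq' := abs_le.1 hq
  rw [sub_neg_eq_add]
  rw [abs_le]
  constructor <;> nlinarith [hl3.1, hl3.2, hq'.1, hq'.2, hS'.1, hS'.2]

lemma phiAux_bound (x : ℝ) (h0 : 0 < x) (h1 : x ≤ 1) :
    |phiAux x - x ^ 2 / 24 + x ^ 4 / 2880| ≤ x ^ 6 := by
  have h := log_sinh_bound (x / 2) (by linarith) (by linarith)
  have hs : 0 < Real.sinh (x / 2) / (x / 2) :=
    div_pos (Real.sinh_pos_iff.2 (by linarith)) (by linarith)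
  have : phiAux x = Real.log (Real.sinh (x / 2) / (x / 2)) := by
    have e : (Real.exp x - 1) / x = Real.exp (x / 2) * (Real.sinh (x / 2) / (x / 2)) := by
      have e1 : Real.exp x = Real.exp (x / 2) * Real.exp (x / 2) := by
        rw [← Real.exp_add]; ring_nf
      rw [Real.sinh_eq, Real.exp_neg, e1]
      field_simp
    rw [phiAux, e, Real.log_mul (Real.exp_pos _).ne' hs.ne', Real.log_exp]
    ring
  rw [this]
  have p6 : 0 < x ^ 6 := by positivity
  rw [abs_le] at h ⊢
  constructor <;> nlinarith [h.1, h.2]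

lemma log_exp_sub_one (x : ℝ) (h : 0 < x) :
    Real.log (Real.exp x - 1) = Real.log x + x / 2 + phiAux x := by
  have : 0 < Real.exp x - 1 := by linarith [Real.add_one_lt_exp h.ne']
  rw [phiAux, Real.log_div this.ne' h.ne']
  ring

lemma log_one_sub_exp_neg (x : ℝ) (h : 0 < x) :
    Real.log (1 - Real.exp (-x)) = Real.log x - x / 2 + phiAux x := by
  have h1 : 0 < Real.exp x - 1 := by linarith [Real.add_one_lt_exp h.ne']
  have : 1 - Real.exp (-x) = Real.exp (-x) * (Real.exp x - 1) := by
    rw [mul_sub, ← Real.exp_add]; simp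
  rw [this, Real.log_mul (Real.exp_pos _).ne' h1.ne', Real.log_exp, log_exp_sub_one x h]
  ring

lemma bCoef_eq (p : ℝ) (h0 : 0 < p) (h1 : p < 1) (n : ℕ) (hn : 0 < n) (u : ℝ)
    (hu : u = 1 / (Real.sqrt (p * (1 - p)) * Real.sqrt n)) :
    bCoef p n = n * (phiAux u - (1 - p) * phiAux ((1 - p) * u) - p * phiAux (p * u)) := by
  obtain ⟨q, hq⟩ : ∃ q, q = 1 - p := ⟨_, rfl⟩
  have hq0 : 0 < q := by linarith
  have hnr : (0 : ℝ) < n := by exact_mod_cast hn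
  obtain ⟨s, hs⟩ : ∃ s, s = Real.sqrt (p * q) := ⟨_, rfl⟩
  obtain ⟨r, hr⟩ : ∃ r, r = Real.sqrt n := ⟨_, rfl⟩
  have hs0 : 0 < s := by rw [hs]; positivity
  have hr0 : 0 < r := by rw [hr]; positivity
  have hss : s ^ 2 = p * q := by rw [hs]; exact Real.sq_sqrt (by positivity)
  have hz0 : z10 p = -(p / s) := by
    rw [z10, ← hq, neg_inj, Real.sqrt_eq_iff_mul_self_eq (by positivity) (by positivity)]
    field_simp
    rw [hss]
  have hz1 : z11 p = q / s := by
    rw [z11, ← hq, Real.sqrt_eq_iff_mul_self_eq (by positivity) (by positivity)]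
    field_simp
    rw [hss]; ring
  rw [← hq, ← hs, ← hr] at hu
  have hu0 : 0 < u := by rw [hu]; positivity
  have hqu : 0 < q * u := by positivity
  have hpu : 0 < p * u := by positivity
  have hpq : p + q = 1 := by linarith
  have E1 : 0 < Real.exp (q * u) - 1 := by linarith [Real.add_one_lt_exp hqu.ne']
  have E2 : 0 < 1 - Real.exp (-(p * u)) := by
    have : Real.exp (-(p * u)) < 1 := by rw [← Real.exp_zero, Real.exp_lt_exp]; linarith
    linarith
  have E3 : 0 < Real.exp u - 1 := by linarith [Real.add_one_lt_exp hu0.ne']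
  have E4 : 0 < Real.exp (p * u) - 1 := by linarith [Real.add_one_lt_exp hpu.ne']
  obtain ⟨L, hL⟩ : ∃ L, L = Real.log (p / q * (Real.exp (q * u) - 1) / (1 - Real.exp (-(p * u)))) :=
    ⟨_, rfl⟩
  have ha : aCoef p n = r * s * L := by
    have i1 : q / s / r = q * u := by rw [hu]; field_simp
    have i2 : -(p / s) / r = -(p * u) := by rw [hu]; field_simp
    have i3 : q / s - -(p / s) = 1 / s := by rw [← hpq]; field_simp; ring
    rw [aCoef, hz0, hz1, ← hr, ← hq, i1, i2, i3, ← hL]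
    field_simp
  have hexpL : Real.exp L = p / q * (Real.exp (q * u) - 1) / (1 - Real.exp (-(p * u))) := by
    rw [hL, Real.exp_log (by positivity)]
  have hLv : L = u / 2 + phiAux (q * u) - phiAux (p * u) := by
    rw [hL, Real.log_div (by positivity) E2.ne', Real.log_mul (by positivity) E1.ne',
      log_exp_sub_one _ hqu, log_one_sub_exp_neg _ hpu, Real.log_div h0.ne' hq0.ne',
      Real.log_mul hq0.ne' hu0.ne', Real.log_mul h0.ne' hu0.ne']
    linear_combination (u / 2) * hpq
  have hb : bCoef p n = n * (-(q * L) + Real.log (q * Real.exp L + p)) := by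
    have j1 : -(-(p / s)) * (r * s * L) / r = -(q * L) + L := by
      field_simp
      linear_combination L * hpq
    have j2 : -(q / s) * (r * s * L) / r = -(q * L) := by field_simp
    rw [bCoef, ha, hz0, hz1, ← hr, ← hq, j1, j2, Real.exp_add]
    have : q * (Real.exp (-(q * L)) * Real.exp L) + p * Real.exp (-(q * L))
        = Real.exp (-(q * L)) * (q * Real.exp L + p) := by ring
    rw [this, Real.log_mul (Real.exp_pos _).ne' (by positivity), Real.log_exp]
  have hK : q * Real.exp L + p = p * (Real.exp u - 1) / (Real.exp (p * u) - 1) := by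
    have k : Real.exp u = Real.exp (q * u) * Real.exp (p * u) := by
      rw [← Real.exp_add]; congr 1; linear_combination (-u) * hpq
    rw [Real.exp_neg] at hexpL E2
    rw [hexpL, k]
    have e := Real.exp_pos (p * u)
    have E2' := E2.ne'
    have E4' := E4.ne'
    have : 1 - (Real.exp (p * u))⁻¹ = (Real.exp (p * u) - 1) / Real.exp (p * u) := by
      field_simp
    rw [this]
    field_simp
    ring
  rw [← hq, hb, hK, Real.log_div (by positivity) E4.ne', Real.log_mul h0.ne' E3.ne',
    log_exp_sub_one _ hu0, log_exp_sub_one _ hpu, Real.log_mul h0.ne' hu0.ne', hLv]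
  have : q = 1 - p := hq
  subst this
  ring

theorem bCoef_asymptotic_expansion (p : ℝ) (hp : p ∈ Set.Ioo (1 / 2 : ℝ) 1) :
    ∃ C > (0 : ℝ), ∃ n₀ : ℕ, ∀ n : ℕ, n₀ ≤ n →
      |bCoef p n - 1 / 8 + (1 - p + p ^ 2) / (576 * p * (1 - p)) / n| ≤ C / n ^ 2 := by
  obtain ⟨hp1, hp2⟩ := hp
  have h0 : 0 < p := by linarith
  have hq0 : 0 < 1 - p := by linarith
  have hc : 0 < p * (1 - p) := by positivity
  refine ⟨3 / (p * (1 - p)) ^ 3, by positivity, ⌈1 / (p * (1 - p))⌉₊ + 1, fun n hn => ?_⟩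
  have hn0 : 0 < n := by omega
  have hnr : (0 : ℝ) < n := by exact_mod_cast hn0
  have hge : 1 / (p * (1 - p)) ≤ (n : ℝ) :=
    (Nat.le_ceil _).trans (by exact_mod_cast (by omega))
  obtain ⟨u, hu⟩ : ∃ u, u = 1 / (Real.sqrt (p * (1 - p)) * Real.sqrt n) := ⟨_, rfl⟩
  rw [bCoef_eq p h0 hp2 n hn0 u hu]
  have hu0 : 0 < u := by rw [hu]; positivity
  have hu2 : u ^ 2 = 1 / (p * (1 - p) * n) := by
    rw [hu, div_pow, mul_pow, Real.sq_sqrt hc.le, Real.sq_sqrt hnr.le, one_pow]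
  have hu1 : u ≤ 1 := by
    have : u ^ 2 ≤ 1 := by
      rw [hu2, div_le_one (by positivity)]
      rw [div_le_iff₀ hc] at hge
      linarith
    nlinarith
  have b1 := phiAux_bound u hu0 hu1
  have b2 := phiAux_bound ((1 - p) * u) (by positivity) (by nlinarith)
  have b3 := phiAux_bound (p * u) (by positivity) (by nlinarith)
  have u6 : 0 < u ^ 6 := by positivity
  have b2' := b2.trans (show ((1 - p) * u) ^ 6 ≤ u ^ 6 from
    pow_le_pow_left₀ (by positivity) (by nlinarith) 6)
  have b3' := b3.trans (show (p * u) ^ 6 ≤ u ^ 6 from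
    pow_le_pow_left₀ (by positivity) (by nlinarith) 6)
  generalize phiAux u = A at *
  generalize phiAux ((1 - p) * u) = B at *
  generalize phiAux (p * u) = D at *
  have hu4 : u ^ 4 = (1 / (p * (1 - p) * n)) ^ 2 := by rw [← hu2]; ring
  have hu6 : u ^ 6 = (1 / (p * (1 - p) * n)) ^ 3 := by rw [← hu2]; ring
  have main : n * (A - (1 - p) * B - p * D) - 1 / 8 + (1 - p + p ^ 2) / (576 * p * (1 - p)) / n
      = n * ((A - u ^ 2 / 24 + u ^ 4 / 2880)
        - (1 - p) * (B - ((1 - p) * u) ^ 2 / 24 + ((1 - p) * u) ^ 4 / 2880)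
        - p * (D - (p * u) ^ 2 / 24 + (p * u) ^ 4 / 2880)) := by
    simp only [mul_pow, hu2, hu4]
    have := hq0.ne'
    field_simp
    ring
  have rhs : 3 / (p * (1 - p)) ^ 3 / (n : ℝ) ^ 2 = n * (3 * u ^ 6) := by
    rw [hu6]; field_simp
  rw [main, rhs, abs_mul, abs_of_pos hnr]
  gcongr
  rw [abs_le] at b1 b2' b3' ⊢
  constructor <;> nlinarith [b1.1, b1.2, b2'.1, b2'.2, b3'.1, b3'.2]
end

section
/- Let p ∈ [1/2, 1) and for n ≥ 1 define a_n = (√n/(z_{1,1} − z_{1,0})) · log( (p/(1−p)) · (exp(z_{1,1}/√n) − 1)/(1 − exp(z_{1,0}/√n)) ) and b_n = n · log( (1−p)·exp(−z_{1,0} a_n/√n) + p·exp(−z_{1,1} a_n/√n) ), where z_{1,0} = −√(p/(1−p)) and z_{1,1} = √((1−p)/p) (for p = 1/2 these reduce to a_n = 1/2 and b_n = n·log cosh(1/(2√n))). Then for every δ > 0 there exists n₀ such that for all n ≥ n₀: 0 < a_n ≤ 1/2 and 1/8 − δ ≤ b_n ≤ 1/8. -/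
open MeasureTheory Filter

namespace AB

noncomputable def L (w : ℝ) : ℝ := Real.log (Real.sinh w / w)

lemma g1 {w : ℝ} (hw : 0 ≤ w) : 0 ≤ w * Real.cosh w - Real.sinh w := by
  have hd : ∀ x : ℝ, HasDerivAt (fun w : ℝ => w * Real.cosh w - Real.sinh w) (x * Real.sinh x) x := by
    intro x
    have := ((hasDerivAt_id' x).mul (Real.hasDerivAt_cosh x)).sub (Real.hasDerivAt_sinh x)
    refine HasDerivAt.congr_deriv this ?_
    ring
  have hm : MonotoneOn (fun w : ℝ => w * Real.cosh w - Real.sinh w) (Set.Ici 0) := by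
    apply monotoneOn_of_deriv_nonneg (convex_Ici 0)
    · exact fun x _ => (hd x).continuousAt.continuousWithinAt
    · exact fun x _ => (hd x).differentiableAt.differentiableWithinAt
    · intro x hx
      rw [interior_Ici, Set.mem_Ioi] at hx
      rw [(hd x).deriv]
      exact mul_nonneg hx.le (Real.sinh_nonneg_iff.2 hx.le)
  have := hm (Set.mem_Ici.2 le_rfl) hw hw
  simpa using this

lemma g2 {w : ℝ} (hw : 0 ≤ w) : 0 ≤ (3 + w ^ 2) * Real.sinh w - 3 * w * Real.cosh w := by
  have hd : ∀ x : ℝ, HasDerivAt (fun w : ℝ => (3 + w ^ 2) * Real.sinh w - 3 * w * Real.cosh w)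
      (x * (x * Real.cosh x - Real.sinh x)) x := by
    intro x
    have := ((((hasDerivAt_id' x).pow 2).const_add 3).mul (Real.hasDerivAt_sinh x)).sub
      (((hasDerivAt_id' x).const_mul 3).mul (Real.hasDerivAt_cosh x))
    refine HasDerivAt.congr_deriv this ?_
    try simp
    ring
  have hm : MonotoneOn (fun w : ℝ => (3 + w ^ 2) * Real.sinh w - 3 * w * Real.cosh w) (Set.Ici 0) := by
    apply monotoneOn_of_deriv_nonneg (convex_Ici 0)
    · exact fun x _ => (hd x).continuousAt.continuousWithinAt
    · exact fun x _ => (hd x).differentiableAt.differentiableWithinAt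
    · intro x hx
      rw [interior_Ici, Set.mem_Ioi] at hx
      rw [(hd x).deriv]
      exact mul_nonneg hx.le (g1 hx.le)
  have := hm (Set.mem_Ici.2 le_rfl) hw hw
  simpa using this

lemma g3 {w : ℝ} (hw : 0 ≤ w) : 0 ≤ Real.sinh w - (w + w ^ 3 / 6) := by
  have hd : ∀ x : ℝ, HasDerivAt (fun w : ℝ => Real.sinh w - (w + w ^ 3 / 6))
      (Real.cosh x - (1 + x ^ 2 / 2)) x := by
    intro x
    have := (Real.hasDerivAt_sinh x).sub
      ((hasDerivAt_id' x).add (((hasDerivAt_id' x).pow 3).div_const 6))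
    refine HasDerivAt.congr_deriv this ?_
    try simp
    ring
  have hm : MonotoneOn (fun w : ℝ => Real.sinh w - (w + w ^ 3 / 6)) (Set.Ici 0) := by
    apply monotoneOn_of_deriv_nonneg (convex_Ici 0)
    · exact fun x _ => (hd x).continuousAt.continuousWithinAt
    · exact fun x _ => (hd x).differentiableAt.differentiableWithinAt
    · intro x hx
      rw [interior_Ici, Set.mem_Ioi] at hx
      rw [(hd x).deriv]
      have h1 : Real.cosh x = 1 + 2 * Real.sinh (x / 2) ^ 2 := by
        have h2 := Real.cosh_two_mul (x / 2)
        have h3 := Real.cosh_sq (x / 2)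
        rw [show 2 * (x / 2) = x by ring] at h2
        linarith
      have h4 : x / 2 ≤ Real.sinh (x / 2) := Real.self_le_sinh_iff.2 (by linarith)
      rw [h1]
      nlinarith
  have := hm (Set.mem_Ici.2 le_rfl) hw hw
  simpa using this

lemma L_deriv {x : ℝ} (hx : 0 < x) : HasDerivAt L (Real.cosh x / Real.sinh x - 1 / x) x := by
  have hs : 0 < Real.sinh x := Real.sinh_pos_iff.2 hx
  have := ((Real.hasDerivAt_sinh x).div (hasDerivAt_id' x) hx.ne').log (by simp [hs.ne', hx.ne'])
  refine HasDerivAt.congr_deriv this ?_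
  simp only [Pi.div_apply]
  field_simp

lemma L_mono {x y : ℝ} (hx : 0 < x) (hxy : x ≤ y) : L x ≤ L y := by
  have hm : MonotoneOn L (Set.Ioi 0) := by
    apply monotoneOn_of_deriv_nonneg (convex_Ioi 0)
    · exact fun x hx => (L_deriv hx).continuousAt.continuousWithinAt
    · intro x hx
      rw [interior_Ioi] at hx
      exact (L_deriv hx).differentiableAt.differentiableWithinAt
    · intro x hx
      rw [interior_Ioi, Set.mem_Ioi] at hx
      rw [(L_deriv hx).deriv]
      have hs : 0 < Real.sinh x := Real.sinh_pos_iff.2 hx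
      have := g1 hx.le
      rw [div_sub_div _ _ hs.ne' hx.ne']
      apply div_nonneg <;> nlinarith
  exact hm hx (hx.trans_le hxy) hxy

lemma G_anti {x y : ℝ} (hx : 0 < x) (hxy : x ≤ y) : L y - y ^ 2 / 6 ≤ L x - x ^ 2 / 6 := by
  have hd : ∀ x : ℝ, 0 < x → HasDerivAt (fun w => L w - w ^ 2 / 6)
      (Real.cosh x / Real.sinh x - 1 / x - x / 3) x := by
    intro x hx
    have := (L_deriv hx).sub (((hasDerivAt_id' x).pow 2).div_const 6)
    refine HasDerivAt.congr_deriv this ?_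
    try simp
    ring
  have hm : AntitoneOn (fun w => L w - w ^ 2 / 6) (Set.Ioi 0) := by
    apply antitoneOn_of_deriv_nonpos (convex_Ioi 0)
    · exact fun x hx => (hd x hx).continuousAt.continuousWithinAt
    · intro x hx
      rw [interior_Ioi] at hx
      exact (hd x hx).differentiableAt.differentiableWithinAt
    · intro x hx
      rw [interior_Ioi, Set.mem_Ioi] at hx
      rw [(hd x hx).deriv]
      have hs : 0 < Real.sinh x := Real.sinh_pos_iff.2 hx
      have h := g2 hx.le
      have : Real.cosh x / Real.sinh x - 1 / x - x / 3 =
        -(((3 + x ^ 2) * Real.sinh x - 3 * x * Real.cosh x) / (3 * x * Real.sinh x)) := by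
        field_simp
        ring
      rw [this]
      have := div_nonneg h (by positivity : 0 ≤ 3 * x * Real.sinh x)
      linarith
  exact hm hx (hx.trans_le hxy) hxy

lemma G_nonpos {x : ℝ} (hx : 0 < x) : L x - x ^ 2 / 6 ≤ 0 := by
  have key : ∀ e : ℝ, 0 < e → L e - e ^ 2 / 6 ≤ e ^ 2 / 3 := by
    intro e he
    have h1 : Real.sinh e / e ≤ Real.exp (e ^ 2 / 2) := by
      have := g1 he.le
      rw [div_le_iff₀ he]
      have := Real.cosh_le_exp_half_sq e
      nlinarith
    have hs : 0 < Real.sinh e := Real.sinh_pos_iff.2 he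
    have h2 : L e ≤ e ^ 2 / 2 := by
      unfold L
      rwa [Real.log_le_iff_le_exp (by positivity)]
    linarith
  by_contra hc
  push Not at hc
  set c := L x - x ^ 2 / 6 with hcdef
  have he : 0 < min x (min 1 c) := by positivity
  set e := min x (min 1 c)
  have h1 := G_anti he (min_le_left _ _ : e ≤ x)
  have h2 := key e he
  have h3 : e ≤ 1 := (min_le_right _ _).trans (min_le_left _ _)
  have h4 : e ≤ c := (min_le_right _ _).trans (min_le_right _ _)
  nlinarith

lemma G_lower {w : ℝ} (hw : 0 < w) : -(w ^ 4 / 72) ≤ L w - w ^ 2 / 6 := by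
  have h1 : 1 + w ^ 2 / 6 ≤ Real.sinh w / w := by
    rw [le_div_iff₀ hw]
    have := g3 hw.le
    nlinarith
  have h2 : Real.log (1 + w ^ 2 / 6) ≤ L w := Real.log_le_log (by positivity) h1
  have ht : 0 ≤ w ^ 2 / 6 := by positivity
  have h3 := Real.le_log_one_add_of_nonneg ht
  have h4 : w ^ 2 / 6 - (w ^ 2 / 6) ^ 2 / 2 ≤ 2 * (w ^ 2 / 6) / (w ^ 2 / 6 + 2) := by
    rw [le_div_iff₀ (by positivity)]
    have : 0 ≤ (w ^ 2 / 6) ^ 3 := by positivity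
    nlinarith
  have : (w ^ 2 / 6) ^ 2 / 2 = w ^ 4 / 72 := by ring
  linarith

lemma exp1 (X : ℝ) : Real.exp (2 * X) - 1 = 2 * Real.exp X * Real.sinh X := by
  rw [Real.sinh_eq, two_mul, Real.exp_add]
  have : Real.exp X * Real.exp (-X) = 1 := by rw [← Real.exp_add]; simp
  linear_combination this

lemma exp2 (Y : ℝ) : 1 - Real.exp (-(2 * Y)) = 2 * Real.exp (-Y) * Real.sinh Y := by
  rw [Real.sinh_eq, two_mul, neg_add, Real.exp_add]
  have : Real.exp Y * Real.exp (-Y) = 1 := by rw [← Real.exp_add]; simp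
  linear_combination -this

lemma exp3 (X Y : ℝ) : Real.exp (2 * X) - Real.exp (-(2 * Y))
    = 2 * Real.exp (X - Y) * Real.sinh (X + Y) := by
  rw [Real.sinh_eq, mul_div_assoc', eq_div_iff two_ne_zero, mul_sub, mul_assoc, mul_assoc,
    ← Real.exp_add, ← Real.exp_add]
  rw [show X - Y + (X + Y) = 2 * X by ring, show X - Y + -(X + Y) = -(2 * Y) by ring]
  ring

lemma exp_L {w : ℝ} (hw : 0 < w) : Real.exp (L w) = Real.sinh w / w := by
  have hs : 0 < Real.sinh w := Real.sinh_pos_iff.2 hw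
  exact Real.exp_log (by positivity)

lemma R_eq {X Y : ℝ} (hX : 0 < X) (hY : 0 < Y) :
    Y / X * (Real.exp (2 * X) - 1) / (1 - Real.exp (-(2 * Y))) = Real.exp (L X - L Y + (X + Y)) := by
  have hs : 0 < Real.sinh X := Real.sinh_pos_iff.2 hX
  have hs' : 0 < Real.sinh Y := Real.sinh_pos_iff.2 hY
  rw [exp1, exp2, Real.exp_add, Real.exp_sub, exp_L hX, exp_L hY, Real.exp_add, Real.exp_neg]
  have := Real.exp_pos Y
  field_simp

lemma M_eq {X Y a : ℝ} (hX : 0 < X) (hY : 0 < Y) (ha : 2 * (X + Y) * a = L X - L Y + (X + Y)) :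
    Real.log (X / (X + Y) * Real.exp (2 * Y * a) + Y / (X + Y) * Real.exp (-(2 * X * a)))
      = L (X + Y) - (Y / (X + Y) * L Y + X / (X + Y) * L X) := by
  have hs' : 0 < Real.sinh Y := Real.sinh_pos_iff.2 hY
  have hXY : 0 < X + Y := by positivity
  have e1 : Real.exp (2 * Y * a) = Real.exp (-(2 * X * a)) *
      (Y / X * (Real.exp (2 * X) - 1) / (1 - Real.exp (-(2 * Y)))) := by
    rw [R_eq hX hY, ← ha, ← Real.exp_add]
    congr 1; ring
  have hne : 1 - Real.exp (-(2 * Y)) ≠ 0 := by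
    rw [exp2]; positivity
  have e2 : X / (X + Y) * Real.exp (2 * Y * a) + Y / (X + Y) * Real.exp (-(2 * X * a))
      = Real.exp (-(2 * X * a) + (L (X + Y) - L Y + X)) := by
    rw [e1]
    have e3 : X / (X + Y) * (Y / X * (Real.exp (2 * X) - 1) / (1 - Real.exp (-(2 * Y))))
       + Y / (X + Y) = Y / (X + Y) * ((Real.exp (2 * X) - Real.exp (-(2 * Y))) / (1 - Real.exp (-(2 * Y)))) := by
      obtain ⟨D, hD⟩ : ∃ D, D = 1 - Real.exp (-(2 * Y)) := ⟨_, rfl⟩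
      have hE : Real.exp (-(2 * Y)) = 1 - D := by rw [hD]; ring
      rw [← hD] at hne
      rw [← hD, hE]
      field_simp
      ring
    have e4 : Y / (X + Y) * ((Real.exp (2 * X) - Real.exp (-(2 * Y))) / (1 - Real.exp (-(2 * Y))))
        = Real.exp (L (X + Y) - L Y + X) := by
      rw [exp3, exp2, Real.exp_add, Real.exp_sub, Real.exp_sub, exp_L hXY, exp_L hY, Real.exp_neg]
      have := Real.exp_pos Y
      field_simp
    rw [Real.exp_add, ← e4, ← e3]
    ring
  rw [e2, Real.log_exp]
  have : 2 * X * a = X / (X + Y) * (L X - L Y + (X + Y)) := by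
    rw [← ha]; field_simp
  rw [this]
  field_simp
  ring

end AB

theorem aCoef_bCoef_eventual_bounds (p : ℝ) (hp : p ∈ Set.Ico (1 / 2 : ℝ) 1) :
    ∀ δ > (0 : ℝ), ∃ n₀ : ℕ, ∀ n : ℕ, n₀ ≤ n →
      0 < aCoef p n ∧ aCoef p n ≤ 1 / 2 ∧ 1 / 8 - δ ≤ bCoef p n ∧ bCoef p n ≤ 1 / 8 := by
  intro δ hδ
  obtain ⟨hp1, hp2⟩ := hp
  have hp0 : 0 < p := by linarith
  have hq0 : 0 < 1 - p := by linarith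
  obtain ⟨u, hu⟩ : ∃ u, u = Real.sqrt ((1 - p) / p) := ⟨_, rfl⟩
  obtain ⟨v, hv⟩ : ∃ v, v = Real.sqrt (p / (1 - p)) := ⟨_, rfl⟩
  have hu0 : 0 < u := by rw [hu]; exact Real.sqrt_pos.2 (by positivity)
  have hv0 : 0 < v := by rw [hv]; exact Real.sqrt_pos.2 (by positivity)
  have hu2 : u ^ 2 = (1 - p) / p := by rw [hu]; exact Real.sq_sqrt (by positivity)
  have huv : u * v = 1 := by
    rw [hu, hv, ← Real.sqrt_mul (by positivity)]
    have : (1 - p) / p * (p / (1 - p)) = 1 := by field_simp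
    rw [this, Real.sqrt_one]
  have huv' : u ≤ v := by
    rw [hu, hv]
    apply Real.sqrt_le_sqrt
    rw [div_le_div_iff₀ hp0 hq0]
    nlinarith
  have hv' : v = 1 / u := by field_simp; linarith
  have hpq : p / (1 - p) = v / u := by
    rw [hv', div_div, ← pow_two, hu2, one_div_div]
  have hpe : p = 1 / (1 + u ^ 2) := by rw [hu2]; field_simp; ring
  have hz0 : z10 p = -v := by rw [hv]; rfl
  have hz1 : z11 p = u := by rw [hu]; rfl
  obtain ⟨N, hN⟩ := exists_nat_gt ((u + v) ^ 4 / δ)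
  refine ⟨N + 1, fun n hn => ?_⟩
  have hNn : (N : ℝ) + 1 ≤ n := by exact_mod_cast hn
  have hn0 : (0 : ℝ) < n := by have : (0 : ℝ) ≤ N := N.cast_nonneg; linarith
  obtain ⟨s, hs⟩ : ∃ s, s = Real.sqrt n := ⟨_, rfl⟩
  have hs0 : 0 < s := by rw [hs]; exact Real.sqrt_pos.2 hn0
  have hs2 : s ^ 2 = n := by rw [hs]; exact Real.sq_sqrt hn0.le
  obtain ⟨X, hX⟩ : ∃ X, X = u / (2 * s) := ⟨_, rfl⟩
  obtain ⟨Y, hY⟩ : ∃ Y, Y = v / (2 * s) := ⟨_, rfl⟩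
  have hX0 : 0 < X := by rw [hX]; positivity
  have hY0 : 0 < Y := by rw [hY]; positivity
  have hXY : X ≤ Y := by rw [hX, hY]; gcongr
  have hXs : u / s = 2 * X := by rw [hX]; field_simp
  have hYs : v / s = 2 * Y := by rw [hY]; field_simp
  have hYX : p / (1 - p) = Y / X := by rw [hpq, hX, hY]; field_simp
  have hpY : p = Y / (X + Y) := by
    rw [hpe, hX, hY, hv']; field_simp; try ring
  have hqX : 1 - p = X / (X + Y) := by
    rw [hpY]; field_simp; ring
  have hprod : X * Y * n = 1 / 4 := by
    rw [hX, hY, ← hs2]; field_simp; linarith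
  have ha : 2 * (X + Y) * aCoef p n = AB.L X - AB.L Y + (X + Y) := by
    unfold aCoef
    rw [hz0, hz1, ← hs, neg_div, hXs, hYs, hYX, AB.R_eq hX0 hY0, Real.log_exp]
    have h1 : s / (u - -v) = 1 / (2 * (X + Y)) := by
      rw [hX, hY, sub_neg_eq_add]
      field_simp
    rw [h1]
    field_simp
  have hL := AB.L_mono hX0 hXY
  have hM := AB.M_eq hX0 hY0 ha
  have hb : bCoef p n = n * (AB.L (X + Y) - (p * AB.L Y + (1 - p) * AB.L X)) := by
    rw [← hqX, ← hpY] at hM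
    rw [← hM]
    unfold bCoef
    rw [hz0, hz1, ← hs]
    rw [show -(-v) * aCoef p n / s = 2 * Y * aCoef p n by rw [← hYs]; ring,
      show -u * aCoef p n / s = -(2 * X * aCoef p n) by rw [← hXs]; ring]
  have hapos : 0 < aCoef p n := by
    have h1 : 0 < AB.L X - AB.L Y + (X + Y) := by
      rw [← Real.exp_lt_exp, Real.exp_zero, ← AB.R_eq hX0 hY0]
      have h2 : 2 * X < Real.exp (2 * X) - 1 := by
        have := Real.add_one_lt_exp (show 2 * X ≠ 0 by positivity); linarith
      have h3 : 1 - Real.exp (-(2 * Y)) < 2 * Y := by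
        have := Real.add_one_lt_exp (show -(2 * Y) ≠ 0 by simp [hY0.ne']); linarith
      have h4 : 0 < 1 - Real.exp (-(2 * Y)) := by
        have : Real.exp (-(2 * Y)) < 1 := by
          rw [← Real.exp_zero]; exact Real.exp_lt_exp.2 (by linarith)
        linarith
      rw [lt_div_iff₀ h4, one_mul]
      calc _ < 2 * Y := h3
        _ = Y / X * (2 * X) := by field_simp
        _ < _ := by gcongr
    rw [← ha] at h1
    exact pos_of_mul_pos_right h1 (by positivity)
  have hD : 0 < X + Y := by positivity
  have hsq : (X + Y) ^ 2 / 6 - (p * (Y ^ 2 / 6) + (1 - p) * (X ^ 2 / 6)) = X * Y / 2 := by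
    rw [hqX, hpY]
    field_simp
    ring
  refine ⟨hapos, ?_, ?_, ?_⟩
  · have h1 : 2 * (X + Y) * aCoef p n ≤ 2 * (X + Y) * (1 / 2) := by linarith
    exact le_of_mul_le_mul_left h1 (by positivity)
  · have h1 := AB.G_lower hD
    have h2 := AB.G_nonpos hX0
    have h3 := AB.G_nonpos hY0
    have h4 : X * Y / 2 - (X + Y) ^ 4 / 72 ≤ AB.L (X + Y) - (p * AB.L Y + (1 - p) * AB.L X) := by
      have := mul_nonpos_of_nonneg_of_nonpos hp0.le h3
      have := mul_nonpos_of_nonneg_of_nonpos hq0.le h2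
      linarith
    have h5 := mul_le_mul_of_nonneg_left h4 hn0.le
    rw [← hb] at h5
    have h6 : n * (X + Y) ^ 4 / 72 ≤ δ := by
      have e : n * (X + Y) ^ 4 / 72 = (u + v) ^ 4 / (1152 * n) := by
        rw [hX, hY, ← hs2]; field_simp; norm_num
      rw [e, div_le_iff₀ (by positivity)]
      rw [div_lt_iff₀ hδ] at hN
      have h7 : (N : ℝ) * δ ≤ n * δ := mul_le_mul_of_nonneg_right (by linarith) hδ.le
      have h8 : 0 ≤ n * δ := by positivity
      linarith
    linarith
  · have h2 := AB.G_anti hX0 (by linarith : X ≤ X + Y)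
    have h3 := AB.G_anti hY0 (by linarith : Y ≤ X + Y)
    have h4 : AB.L (X + Y) - (p * AB.L Y + (1 - p) * AB.L X) ≤ X * Y / 2 := by
      have := mul_le_mul_of_nonneg_left h3 hp0.le
      have := mul_le_mul_of_nonneg_left h2 hq0.le
      linarith
    have h5 := mul_le_mul_of_nonneg_left h4 hn0.le
    rw [← hb] at h5
    linarith
end
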